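/- Fix ε > 0 and a real number α ∉ {0, 1, 2, 3}. For integers m, h₁, h₂ set t(m, h₁, h₂) := ((m + h₁ + h₂)^α − (m + h₂)^α) − ((m + h₁)^α − m^α). Let M, H₁, H₂ be integers ≥ 10 with H₁ ≤ H₂ ≤ M^{2/3 − ε}, let Δ > 0, and set T := M^{α−2} H₁ H₂. Let 𝓕(M, H₁, H₂, Δ) be the number of sextuples (m, m̃, h₁, h̃₁, h₂, h̃₂) of integers with M ≤ m, m̃ < 2M, H₁ ≤ h₁, h̃₁ < 2H₁, H₂ ≤ h₂, h̃₂ < 2H₂, satisfying |t(m, h₁, h₂) − t(m̃, h̃₁, h̃₂)| ≤ Δ T. Then 𝓕(M, H₁, H₂, Δ) ≪ M^{2ε} ( M H₁ H₂ + Δ (M H₁ H₂)² + M^{−2} H₁² H₂⁶ + H₁² H₂^{8/3} ), where the implied constant depends on ε and α. -/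

import Mathlib

/-!
Write `N = H₁H₂`, `β = 1 / (α - 2)` and `κ = (α - 3) / 24`. Expanding about the centre
`x = m + (h₁ + h₂) / 2` gives `t(m, h₁, h₂) = α(α-1) h₁h₂ τ ^ (α-2)` with
`τ = x + κ(h₁² + h₂²) / x + O(h₂⁴ / m³)` (`tCZ_eq`). Fix the quadruple of increments
`(h₁, h₂, k₁, k₂)`, where `k₁, k₂` are the increments attached to `m̃`, and put
`θ = (k₁k₂ / h₁h₂) ^ β`. Then `|t - t̃| ≤ ΔT` forces the integer point
`(Y, X) = (2m̃ + k₁ + k₂, 2m + h₁ + h₂)` to lie within `δ ≍ ΔM + H₂⁴ / M³` of the curve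
`X = θY + μ / Y`, where `μ ≪ H₂²` depends only on the quadruple (`reduction`).

For a fixed quadruple, cut the range of `Y` into windows of length
`W ≍ min(M / H₂^{2/3}, 1 / δ)`. Inside a window all chords between consecutive points are parallel,
since the determinant of two of them is an integer less than `1` in absolute value
(`chords_parallel`). Windows contribute `O(H₂^{2/3} + δM)` points. If a slope `r` occurs for `j ≥ 2`
chords, comparison of the first chord with the last eliminates `μ` and shows that `r` is a
good rational approximation: `r.den · j ≪ M` and `|θ - r| ≪ δM / (r.den² j)` (`points_near_curve`,
`quad_count`). If `δ > 1/4`, each `m̃` trivially admits `O(δ)` values of `m`.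

It remains to sum the number of such `r` over all quadruples and all `j`. A quadruple is determined by
the products `(n, ñ) = (h₁h₂, k₁k₂)` up to divisor functions. The triples `(n, ñ, r)` with
`r.den ≍ Q` and `|(ñ / n) ^ β - r| ≤ ρ` number `≪ (NQ + ρQ²N²) log N`, because for given
`gcd(n, ñ)` both the fractions `ñ / n` and the rationals `r` are well spaced (`spacing_count`).
Summing over dyadic `Q` and over `j` yields `MN + δMN²` up to divisor functions and logarithms
(`rational_count`). Altogether the count is `≪ M^{2ε} (MN + δMN² + N²H₂^{2/3})`, which is the claim.
The argument needs `H₂ ≤ cM`; otherwise `H₂ ≤ M^{2/3}` bounds `M` and the trivial estimate suffices.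
-/

open Filter

/-- The third difference `t(m, h₁, h₂) = ((m+h₁+h₂)^α − (m+h₂)^α) − ((m+h₁)^α − m^α)`. -/
noncomputable def tCZ (α : ℝ) (m h₁ h₂ : ℕ) : ℝ :=
  (((m + h₁ + h₂ : ℕ) : ℝ) ^ α - ((m + h₂ : ℕ) : ℝ) ^ α)
    - (((m + h₁ : ℕ) : ℝ) ^ α - (m : ℝ) ^ α)

/-- The number of sextuples `(m, m̃, h₁, h̃₁, h₂, h̃₂)` with `M ≤ m, m̃ < 2M`,
`H₁ ≤ h₁, h̃₁ < 2H₁`, `H₂ ≤ h₂, h̃₂ < 2H₂` and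
`|t(m, h₁, h₂) − t(m̃, h̃₁, h̃₂)| ≤ Δ·M^{α−2}H₁H₂`. -/
noncomputable def sextCount (α : ℝ) (M H₁ H₂ : ℕ) (Δ : ℝ) : ℕ :=
  (((Finset.Ico M (2 * M) ×ˢ Finset.Ico M (2 * M))
      ×ˢ (Finset.Ico H₁ (2 * H₁) ×ˢ Finset.Ico H₁ (2 * H₁))
      ×ˢ (Finset.Ico H₂ (2 * H₂) ×ˢ Finset.Ico H₂ (2 * H₂))).filter
    (fun q : (ℕ × ℕ) × (ℕ × ℕ) × (ℕ × ℕ) =>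
      |tCZ α q.1.1 q.2.1.1 q.2.2.1 - tCZ α q.1.2 q.2.1.2 q.2.2.2|
        ≤ Δ * ((M : ℝ) ^ (α - 2) * H₁ * H₂))).card

/-! ### Spacing, divisors and logarithms -/

/-- A family of points pairwise at least `s` apart inside a set of diameter `ℓ` has at most
`ℓ / s + 1` members. -/
lemma card_le_of_spaced {ι : Type*} (T : Finset ι) (f : ι → ℝ) (s ℓ : ℝ) (hs : 0 < s) (hℓ : 0 ≤ ℓ)
    (hsp : ∀ i ∈ T, ∀ j ∈ T, i ≠ j → s ≤ |f i - f j|)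
    (hdiam : ∀ i ∈ T, ∀ j ∈ T, f i - f j ≤ ℓ) :
    (T.card : ℝ) ≤ ℓ / s + 1 := by
  classical
  rcases T.eq_empty_or_nonempty with rfl | hne
  · simp only [Finset.card_empty, Nat.cast_zero]; positivity
  obtain ⟨a, ha, hmin⟩ := T.exists_min_image f hne
  have hinj : Set.InjOn (fun i => ⌊(f i - f a) / s⌋₊) (T : Set ι) := by
    intro i hi j hj hij
    by_contra hne
    have h1 := hsp i hi j hj hne
    have e1 : 0 ≤ (f i - f a) / s := div_nonneg (by linarith [hmin i hi]) hs.le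
    have e2 : 0 ≤ (f j - f a) / s := div_nonneg (by linarith [hmin j hj]) hs.le
    simp only at hij
    have a1 := Nat.floor_le e1
    have a2 := Nat.lt_floor_add_one ((f i - f a) / s)
    have b1 := Nat.floor_le e2
    have b2 := Nat.lt_floor_add_one ((f j - f a) / s)
    rw [hij] at a1 a2
    have : |(f i - f a) / s - (f j - f a) / s| < 1 := by
      rw [abs_lt]; constructor <;> linarith
    rw [← sub_div, abs_div, abs_of_pos hs, div_lt_one hs] at this
    have e : f i - f a - (f j - f a) = f i - f j := by ring
    rw [e] at this
    linarith
  have hsub : T.image (fun i => ⌊(f i - f a) / s⌋₊) ⊆ Finset.range (⌊ℓ / s⌋₊ + 1) := by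
    intro k hk
    obtain ⟨i, hi, rfl⟩ := Finset.mem_image.1 hk
    rw [Finset.mem_range, Nat.lt_succ_iff]
    exact Nat.floor_le_floor (div_le_div_of_nonneg_right (hdiam i hi a ha) hs.le)
  have hc := Finset.card_le_card hsub
  rw [Finset.card_image_of_injOn hinj, Finset.card_range] at hc
  have hl : 0 ≤ ℓ / s := by positivity
  calc (T.card : ℝ) ≤ ((⌊ℓ / s⌋₊ + 1 : ℕ) : ℝ) := by exact_mod_cast hc
    _ ≤ ℓ / s + 1 := by push_cast; linarith [Nat.floor_le hl]

lemma rpow_lipschitz (γ a b : ℝ) (ha : 0 < a) :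
    ∃ L : ℝ, 0 < L ∧ ∀ x ∈ Set.Icc a b, ∀ y ∈ Set.Icc a b,
      |x ^ γ - y ^ γ| ≤ L * |x - y| := by
  have hd : ∀ x ∈ Set.Icc a b, HasDerivWithinAt (fun x : ℝ => x ^ γ) (γ * x ^ (γ - 1))
      (Set.Icc a b) x := fun x hx =>
    (Real.hasDerivAt_rpow_const (Or.inl (lt_of_lt_of_le ha hx.1).ne')).hasDerivWithinAt
  have hc : ContinuousOn (fun x : ℝ => γ * x ^ (γ - 1)) (Set.Icc a b) := by
    intro x hx
    have := (lt_of_lt_of_le ha hx.1).ne'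
    exact (continuousAt_const.mul (Real.continuousAt_rpow_const _ _ (Or.inl this))).continuousWithinAt
  obtain ⟨C, hC⟩ := isCompact_Icc.exists_bound_of_continuousOn hc
  refine ⟨max C 1, by positivity, fun x hx y hy => ?_⟩
  have := (convex_Icc a b).norm_image_sub_le_of_norm_hasDerivWithin_le hd
    (C := max C 1) (fun z hz => (hC z hz).trans (le_max_left _ _)) hy hx
  simpa using this

/-- The divisor bound `d(n) ≪ n^η`. -/
lemma divisor_bound (η : ℝ) (hη : 0 < η) :
    ∃ C : ℝ, 1 ≤ C ∧ ∀ n : ℕ, 1 ≤ n → (n.divisors.card : ℝ) ≤ C * (n : ℝ) ^ η := by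
  set B : ℝ := max 1 (1 / (η * Real.log 2)) with hB
  have hB1 : 1 ≤ B := le_max_left _ _
  have hlog : 0 < η * Real.log 2 := mul_pos hη (Real.log_pos (by norm_num))
  -- primes `p ≥ P` satisfy `p ^ η ≥ 2`, so their local factor is at most `1`; each of the at most
  -- `P` smaller primes costs a factor `B`
  set P : ℕ := ⌈(2 : ℝ) ^ (1 / η)⌉₊ with hP
  refine ⟨B ^ P, one_le_pow₀ hB1, fun n hn => ?_⟩
  have hn0 : n ≠ 0 := by omega
  have key : ∀ p ∈ n.primeFactors, ((n.factorization p + 1 : ℕ) : ℝ) ≤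
      (if p < P then B else 1) * ((p : ℝ) ^ (n.factorization p)) ^ η := by
    intro p hp
    have hp' := Nat.prime_of_mem_primeFactors hp
    have hp2 : (2 : ℝ) ≤ p := by exact_mod_cast hp'.two_le
    set a := n.factorization p
    have e : ((p : ℝ) ^ a) ^ η = ((p : ℝ) ^ η) ^ a := by
      rw [← Real.rpow_natCast, ← Real.rpow_mul (by linarith), mul_comm,
        Real.rpow_mul (by linarith), Real.rpow_natCast]
    rw [e]
    split_ifs with h
    · have h2 : (2 : ℝ) ^ η ≤ (p : ℝ) ^ η := Real.rpow_le_rpow (by norm_num) hp2 hη.le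
      have h3 : 1 + η * Real.log 2 ≤ (2 : ℝ) ^ η := by
        rw [Real.rpow_def_of_pos (by norm_num)]
        have := Real.add_one_le_exp (Real.log 2 * η)
        linarith
      have h4 : 1 + (a : ℝ) * (η * Real.log 2) ≤ ((p : ℝ) ^ η) ^ a :=
        calc 1 + (a : ℝ) * (η * Real.log 2) ≤ (1 + η * Real.log 2) ^ a :=
              one_add_mul_le_pow (by linarith) a
          _ ≤ _ := pow_le_pow_left₀ (by linarith) (h3.trans h2) a
      have h5 : 1 ≤ B * (η * Real.log 2) := by
        have : 1 / (η * Real.log 2) ≤ B := le_max_right _ _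
        rwa [div_le_iff₀ hlog] at this
      have h6 : (0 : ℝ) ≤ a := by positivity
      calc ((a + 1 : ℕ) : ℝ) = 1 + a * 1 := by push_cast; ring
        _ ≤ B * 1 + a * (B * (η * Real.log 2)) := by gcongr; linarith
        _ = B * (1 + (a : ℝ) * (η * Real.log 2)) := by ring
        _ ≤ _ := by gcongr
    · have h2 : (2 : ℝ) ≤ (p : ℝ) ^ η := by
        have h1 : (2 : ℝ) ^ (1 / η) ≤ p := by
          have : (P : ℝ) ≤ p := by exact_mod_cast not_lt.1 h
          exact (Nat.le_ceil _).trans this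
        calc (2 : ℝ) = ((2 : ℝ) ^ (1 / η)) ^ η := by
              rw [← Real.rpow_mul (by norm_num), one_div_mul_cancel hη.ne', Real.rpow_one]
          _ ≤ _ := Real.rpow_le_rpow (by positivity) h1 hη.le
      rw [one_mul]
      calc ((a + 1 : ℕ) : ℝ) ≤ (2 : ℝ) ^ a := by exact_mod_cast Nat.lt_two_pow_self
        _ ≤ _ := pow_le_pow_left₀ (by norm_num) h2 a
  have hnp : (n : ℝ) = ∏ p ∈ n.primeFactors, (p : ℝ) ^ (n.factorization p) := by
    conv_lhs => rw [← Nat.prod_factorization_pow_eq_self hn0]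
    rw [Finsupp.prod]
    push_cast
    rfl
  calc (n.divisors.card : ℝ) = ∏ p ∈ n.primeFactors, ((n.factorization p + 1 : ℕ) : ℝ) := by
        rw [Nat.card_divisors hn0]; push_cast; rfl
    _ ≤ ∏ p ∈ n.primeFactors, ((if p < P then B else 1) * ((p : ℝ) ^ (n.factorization p)) ^ η) :=
        Finset.prod_le_prod (fun _ _ => by positivity) key
    _ = (∏ p ∈ n.primeFactors, (if p < P then B else 1)) * (n : ℝ) ^ η := by
        rw [Finset.prod_mul_distrib, Real.finsetProd_rpow _ _ (fun _ _ => by positivity), ← hnp]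
    _ ≤ B ^ P * (n : ℝ) ^ η := by
        gcongr
        rw [Finset.prod_ite, Finset.prod_const, Finset.prod_const_one, mul_one]
        apply pow_le_pow_right₀ hB1
        calc _ ≤ (Finset.range P).card := Finset.card_le_card (by
              intro p hp; simpa using (Finset.mem_filter.1 hp).2)
          _ = P := Finset.card_range P

/-- Logarithms are absorbed by powers. -/
lemma log_bound (η : ℝ) (hη : 0 < η) :
    ∃ C : ℝ, 1 ≤ C ∧ ∀ x : ℝ, 1 ≤ x → 1 + Real.log x ≤ C * x ^ η := by
  refine ⟨1 + 1 / η, by have := one_div_pos.2 hη; linarith, fun x hx => ?_⟩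
  have h1 := Real.log_le_rpow_div (by linarith : 0 ≤ x) hη
  have h2 : 1 ≤ x ^ η := Real.one_le_rpow hx hη.le
  calc 1 + Real.log x ≤ x ^ η + x ^ η / η := add_le_add h2 h1
    _ = _ := by ring

/-! ### Fractions whose powers are close to rationals -/

/-- Distinct rationals of denominator at most `D` are `D⁻²` apart. -/
lemma rat_spaced (D : ℕ) (r r' : ℚ) (hr : r.den ≤ D) (hr' : r'.den ≤ D)
    (hne : r ≠ r') : 1 / (D : ℝ) ^ 2 ≤ |(r : ℝ) - r'| := by
  have h0 : r - r' ≠ 0 := sub_ne_zero.2 hne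
  have hden : (r - r').den ≤ D ^ 2 := by
    have := Nat.le_of_dvd (by positivity) (Rat.sub_den_dvd r r')
    calc _ ≤ r.den * r'.den := this
      _ ≤ D * D := Nat.mul_le_mul hr hr'
      _ = _ := by ring
  have hnum : (1 : ℤ) ≤ |(r - r').num| := Int.one_le_abs (Rat.num_ne_zero.2 h0)
  have e : |(r : ℝ) - r'| = (|(r - r').num| : ℤ) / ((r - r').den : ℝ) := by
    have h1 : ((r : ℝ) - r') = ((r - r' : ℚ) : ℝ) := by push_cast; ring
    rw [h1, Rat.cast_def, abs_div, Nat.abs_cast, Int.cast_abs]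
  rw [e]
  have hd0 : (0 : ℝ) < (r - r').den := by exact_mod_cast (r - r').den_pos
  apply div_le_div₀ (by positivity) (by exact_mod_cast hnum) hd0
  exact_mod_cast hden

/-- Fractions `k / n` with `gcd(n, k) = g` have reduced denominator at most `4N / g`, which improves
the trivial spacing `(4N)⁻²` by a factor `g²`. -/
lemma ratio_spaced (N g n n' k k' : ℕ) (hg : n.gcd k = g) (hg' : n'.gcd k' = g)
    (hn : 1 ≤ n) (hn' : 1 ≤ n') (hnN : n ≤ 4 * N) (hnN' : n' ≤ 4 * N)
    (hne : (n, k) ≠ (n', k')) :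
    (g : ℝ) ^ 2 / (16 * (N : ℝ) ^ 2) ≤ |(k : ℝ) / n - (k' : ℝ) / n'| := by
  have hgpos : 0 < g := hg ▸ Nat.gcd_pos_of_pos_left _ hn
  obtain ⟨a, b, hab, ha, hb⟩ := Nat.exists_coprime n k
  obtain ⟨a', b', hab', ha', hb'⟩ := Nat.exists_coprime n' k'
  rw [hg] at ha hb
  rw [hg'] at ha' hb'
  have ha0 : 0 < a := Nat.pos_of_ne_zero (by rintro rfl; simp at ha; omega)
  have ha0' : 0 < a' := Nat.pos_of_ne_zero (by rintro rfl; simp at ha'; omega)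
  have hz : (b : ℤ) * a' - b' * a ≠ 0 := by
    intro h
    have h' : b * a' = b' * a := by zify; linarith
    have d1 : a ∣ a' := hab.dvd_of_dvd_mul_left ⟨b', by rw [h']; ring⟩
    have d2 : a' ∣ a := hab'.dvd_of_dvd_mul_left ⟨b, by rw [← h']; ring⟩
    have e := Nat.dvd_antisymm d1 d2
    subst e
    have e2 : b = b' := Nat.eq_of_mul_eq_mul_right ha0 h'
    subst e2
    apply hne
    rw [ha, hb, ha', hb']
  have h1 : (1 : ℝ) ≤ |(b : ℝ) * a' - b' * a| := by
    have := Int.one_le_abs hz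
    exact_mod_cast this
  have gR : (0 : ℝ) < g := by exact_mod_cast hgpos
  have aR : (0 : ℝ) < a := by exact_mod_cast ha0
  have aR' : (0 : ℝ) < a' := by exact_mod_cast ha0'
  have e : (k : ℝ) / n - (k' : ℝ) / n' = ((b : ℝ) * a' - b' * a) / (a * a') := by
    rw [ha, hb, ha', hb']; push_cast; field_simp
  have hN : (g : ℝ) * a ≤ 4 * N := by
    have : ((a * g : ℕ) : ℝ) ≤ ((4 * N : ℕ) : ℝ) := by rw [← ha]; exact_mod_cast hnN
    push_cast at this; linarith
  have hN' : (g : ℝ) * a' ≤ 4 * N := by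
    have : ((a' * g : ℕ) : ℝ) ≤ ((4 * N : ℕ) : ℝ) := by rw [← ha']; exact_mod_cast hnN'
    push_cast at this; linarith
  have hN0 : (0 : ℝ) < N := by
    have : 0 < (g : ℝ) * a := by positivity
    linarith
  rw [e, abs_div, abs_of_pos (mul_pos aR aR'), div_le_div_iff₀ (by positivity) (by positivity)]
  calc (g : ℝ) ^ 2 * (a * a') = (g * a) * (g * a') := by ring
    _ ≤ (4 * N) * (4 * N) := by gcongr
    _ = 1 * (16 * (N : ℝ) ^ 2) := by ring
    _ ≤ _ := by gcongr

lemma rpow_bdd (β R : ℝ) (hR : 1 ≤ R) : ∀ x ∈ Set.Icc (1 / R) R,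
    x ^ β ∈ Set.Icc (R ^ (-|β|)) (R ^ |β|) := by
  intro x hx
  have hR0 : 0 < R := by linarith
  have hx0 : 0 < x := lt_of_lt_of_le (by positivity) hx.1
  have hl1 : Real.log x ≤ Real.log R := Real.log_le_log hx0 hx.2
  have hl2 : -Real.log R ≤ Real.log x := by
    rw [← Real.log_inv]
    exact Real.log_le_log (by positivity) (by simpa [one_div] using hx.1)
  have h4 : |Real.log x * β| ≤ Real.log R * |β| := by
    rw [abs_mul]; gcongr; exact abs_le.2 ⟨hl2, hl1⟩
  have := abs_le.1 h4
  rw [Real.rpow_def_of_pos hx0, Real.rpow_def_of_pos hR0, Real.rpow_def_of_pos hR0]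
  constructor <;> apply Real.exp_le_exp.2 <;> linarith

lemma rpow_inv_lipschitz (β R : ℝ) (hβ : β ≠ 0) (hR : 1 ≤ R) :
    ∃ L : ℝ, 0 < L ∧ ∀ x ∈ Set.Icc (1 / R) R, ∀ y ∈ Set.Icc (1 / R) R,
      |x - y| ≤ L * |x ^ β - y ^ β| := by
  have hb := rpow_bdd β R hR
  have hR0 : 0 < R := by linarith
  obtain ⟨L, hL, h⟩ := rpow_lipschitz β⁻¹ (R ^ (-|β|)) (R ^ |β|) (by positivity)
  refine ⟨L, hL, fun x hx y hy => ?_⟩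
  have h1 : 0 < 1 / R := by positivity
  have := h _ (hb x hx) _ (hb y hy)
  rwa [Real.rpow_rpow_inv (by linarith [hx.1]) hβ, Real.rpow_rpow_inv (by linarith [hy.1]) hβ] at this

/-- The number of triples `(n, k, r)` with `(k / n) ^ β` within `ρ` of the rational `r`, for fixed
`gcd(n, k) = g` and denominators of `r` at most `2Q`. Both the fractions `k / n` and the rationals `r`
are well spaced; fixing first whichever family is sparser gives the bound. -/
lemma spacing_gcd (β : ℝ) (hβ : β ≠ 0) :
    ∃ C : ℝ, 0 < C ∧ ∀ (N Q g : ℕ) (ρ : ℝ) (T : Finset ((ℕ × ℕ) × ℚ)), 1 ≤ N → 1 ≤ Q → 0 ≤ ρ →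
      1 ≤ g →
      (∀ t ∈ T, (N ≤ t.1.1 ∧ t.1.1 < 4 * N) ∧ (N ≤ t.1.2 ∧ t.1.2 < 4 * N) ∧ t.2.den ≤ 2 * Q ∧
        |((t.1.2 : ℝ) / t.1.1) ^ β - t.2| ≤ ρ ∧ t.1.1.gcd t.1.2 = g) →
      (T.card : ℝ) ≤ C * ((N : ℝ) * Q + ρ * Q ^ 2 * N ^ 2) / g := by
  obtain ⟨L, hL, hLip⟩ := rpow_inv_lipschitz β 4 hβ (by norm_num)
  set A : ℝ := (4 : ℝ) ^ |β| with hA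
  have hA0 : 0 < A := by positivity
  refine ⟨720 + (4 * (A + 2) + 1) * (64 * L + 1), by positivity, ?_⟩
  intro N Q g ρ T hN hQ hρ hg hT
  have hNR : (1 : ℝ) ≤ N := by exact_mod_cast hN
  have hQR : (1 : ℝ) ≤ Q := by exact_mod_cast hQ
  have hgR : (1 : ℝ) ≤ g := by exact_mod_cast hg
  have hrange : ∀ t ∈ T, ((t.1.2 : ℝ) / t.1.1) ∈ Set.Icc (1 / 4 : ℝ) 4 := by
    intro t ht
    obtain ⟨⟨a1, a2⟩, ⟨b1, b2⟩, -⟩ := hT t ht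
    have a1' : (N : ℝ) ≤ t.1.1 := by exact_mod_cast a1
    have a2' : (t.1.1 : ℝ) ≤ 4 * N := by exact_mod_cast a2.le
    have b1' : (N : ℝ) ≤ t.1.2 := by exact_mod_cast b1
    have b2' : (t.1.2 : ℝ) ≤ 4 * N := by exact_mod_cast b2.le
    constructor
    · rw [div_le_div_iff₀ (by norm_num) (by linarith)]; linarith
    · rw [div_le_iff₀ (by linarith)]; linarith
  set s : ℝ := (g : ℝ) ^ 2 / (16 * (N : ℝ) ^ 2) with hs
  have hs0 : 0 < s := by positivity
  have hspace : ∀ t ∈ T, ∀ t' ∈ T, t.1 ≠ t'.1 →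
      s ≤ |((t.1.2 : ℝ) / t.1.1) - ((t'.1.2 : ℝ) / t'.1.1)| := by
    intro t ht t' ht' hne
    obtain ⟨⟨a1, a2⟩, -, -, -, h⟩ := hT t ht
    obtain ⟨⟨a1', a2'⟩, -, -, -, h'⟩ := hT t' ht'
    exact ratio_spaced N g _ _ _ _ h h' (by omega) (by omega) a2.le a2'.le hne
  have hrsp : ∀ t ∈ T, ∀ t' ∈ T, t.2 ≠ t'.2 → 1 / (4 * (Q : ℝ) ^ 2) ≤ |(t.2 : ℝ) - t'.2| := by
    intro t ht t' ht' hne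
    have := rat_spaced (2 * Q) t.2 t'.2 (hT t ht).2.2.1 (hT t' ht').2.2.1 hne
    have e : ((2 * Q : ℕ) : ℝ) ^ 2 = 4 * (Q : ℝ) ^ 2 := by push_cast; ring
    rwa [e] at this
  -- at most `80 N² / g²` fractions `k / n`, each having at most `8ρQ² + 1` rationals `r` nearby
  have count1 : (T.card : ℝ) ≤ (8 * ρ * Q ^ 2 + 1) * (80 * N ^ 2 / g ^ 2) := by
    have c1 : ((T.image Prod.fst).card : ℝ) ≤ 80 * N ^ 2 / g ^ 2 := by
      rcases T.eq_empty_or_nonempty with rfl | ⟨t0, ht0⟩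
      · simp; positivity
      have hg4 : (g : ℝ) ≤ 4 * N := by
        obtain ⟨⟨a1, a2⟩, -, -, -, h⟩ := hT t0 ht0
        have : g ≤ t0.1.1 := h ▸ Nat.gcd_le_left _ (by omega)
        exact_mod_cast (by omega : g ≤ 4 * N)
      have := card_le_of_spaced (T.image Prod.fst) (fun p : ℕ × ℕ => (p.2 : ℝ) / p.1) s 4 hs0
        (by norm_num) (by
          intro i hi j hj hij
          obtain ⟨t, ht, rfl⟩ := Finset.mem_image.1 hi
          obtain ⟨t', ht', rfl⟩ := Finset.mem_image.1 hj
          exact hspace t ht t' ht' hij) (by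
          intro i hi j hj
          obtain ⟨t, ht, rfl⟩ := Finset.mem_image.1 hi
          obtain ⟨t', ht', rfl⟩ := Finset.mem_image.1 hj
          have h1 := hrange t ht
          have h2 := hrange t' ht'
          linarith [h1.2, h2.1])
      refine this.trans ?_
      have e : (4 : ℝ) / s = 64 * N ^ 2 / g ^ 2 := by rw [hs]; field_simp; norm_num
      have e2 : (1 : ℝ) ≤ 16 * N ^ 2 / g ^ 2 := by
        rw [le_div_iff₀ (by positivity)]
        nlinarith
      rw [e]
      have : (80 : ℝ) * N ^ 2 / g ^ 2 = 64 * N ^ 2 / g ^ 2 + 16 * N ^ 2 / g ^ 2 := by ring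
      linarith
    have hcard := Finset.card_le_mul_card_image (f := Prod.fst) T ⌊8 * ρ * Q ^ 2 + 1⌋₊ (by
      intro p _
      apply Nat.le_floor
      have := card_le_of_spaced (T.filter (fun t => t.1 = p)) (fun t => (t.2 : ℝ))
        (1 / (4 * (Q : ℝ) ^ 2)) (2 * ρ) (by positivity) (by positivity) (by
          intro i hi j hj hij
          rw [Finset.mem_filter] at hi hj
          exact hrsp i hi.1 j hj.1 (fun h => hij (Prod.ext (hi.2.trans hj.2.symm) h))) (by
          intro i hi j hj
          rw [Finset.mem_filter] at hi hj
          have h1 := abs_le.1 (hT i hi.1).2.2.2.1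
          have h2 := abs_le.1 (hT j hj.1).2.2.2.1
          rw [hi.2] at h1
          rw [hj.2] at h2
          linarith [h1.1, h2.2])
      refine this.trans (le_of_eq ?_)
      field_simp
      ring)
    calc (T.card : ℝ) ≤ (⌊8 * ρ * Q ^ 2 + 1⌋₊ : ℝ) * ((T.image Prod.fst).card : ℝ) := by
          exact_mod_cast hcard
      _ ≤ _ := by
          apply mul_le_mul (Nat.floor_le (by positivity)) c1 (by positivity) (by positivity)
  have hgg : (N : ℝ) ^ 2 / g ^ 2 ≤ N ^ 2 / g := by
    apply div_le_div_of_nonneg_left (by positivity) (by positivity); nlinarith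
  have hbig : 0 ≤ (4 * (A + 2) + 1) * (64 * L + 1) := by positivity
  have main1 : (T.card : ℝ) ≤ 720 * ((N : ℝ) * Q + ρ * Q ^ 2 * N ^ 2) / g →
      (T.card : ℝ) ≤ (720 + (4 * (A + 2) + 1) * (64 * L + 1)) * ((N : ℝ) * Q + ρ * Q ^ 2 * N ^ 2) / g := by
    intro h
    refine h.trans ?_
    gcongr
    linarith
  by_cases hcase1 : 1 ≤ ρ * Q ^ 2
  · apply main1
    refine count1.trans ?_
    calc (8 * ρ * Q ^ 2 + 1) * (80 * (N : ℝ) ^ 2 / g ^ 2)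
        ≤ (9 * (ρ * Q ^ 2)) * (80 * ((N : ℝ) ^ 2 / g)) := by
          apply mul_le_mul _ _ (by positivity) (by positivity)
          · linarith
          · rw [mul_div_assoc]; gcongr
      _ = 720 * (ρ * Q ^ 2 * N ^ 2) / g := by ring
      _ ≤ _ := by gcongr; nlinarith
  by_cases hcase2 : (N : ℝ) ≤ Q * g
  · apply main1
    refine count1.trans ?_
    calc (8 * ρ * Q ^ 2 + 1) * (80 * (N : ℝ) ^ 2 / g ^ 2)
        = 640 * (ρ * Q ^ 2) * (N ^ 2 / g ^ 2) + 80 * (N * N / (g ^ 2)) := by ring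
      _ ≤ 640 * (ρ * Q ^ 2) * (N ^ 2 / g) + 80 * (N * Q / g) := by
          gcongr 640 * (ρ * Q ^ 2) * ?_ + 80 * ?_
          rw [div_le_div_iff₀ (by positivity) (by positivity)]
          nlinarith [mul_le_mul_of_nonneg_left hcase2 (by positivity : 0 ≤ (N : ℝ) * g)]
      _ = (640 * (ρ * Q ^ 2 * N ^ 2) + 80 * (N * Q)) / g := by ring
      _ ≤ _ := by
          gcongr
          have : 0 ≤ ρ * Q ^ 2 * N ^ 2 := by positivity
          have : 0 ≤ (N : ℝ) * Q := by positivity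
          linarith
  -- here `Qg < N`: at most `O(Q²)` rationals `r`, each having `O(ρN² / g² + 1)` fractions nearby
  push Not at hcase1 hcase2
  have hρ1 : ρ ≤ 1 := by nlinarith
  have c1 : ((T.image Prod.snd).card : ℝ) ≤ (4 * (A + 2) + 1) * Q ^ 2 := by
    have := card_le_of_spaced (T.image Prod.snd) (fun r : ℚ => (r : ℝ)) (1 / (4 * (Q : ℝ) ^ 2))
      (A + 2) (by positivity) (by positivity) (by
        intro i hi j hj hij
        obtain ⟨t, ht, rfl⟩ := Finset.mem_image.1 hi
        obtain ⟨t', ht', rfl⟩ := Finset.mem_image.1 hj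
        exact hrsp t ht t' ht' hij) (by
        intro i hi j hj
        obtain ⟨t, ht, rfl⟩ := Finset.mem_image.1 hi
        obtain ⟨t', ht', rfl⟩ := Finset.mem_image.1 hj
        have h1 := abs_le.1 (hT t ht).2.2.2.1
        have h2 := abs_le.1 (hT t' ht').2.2.2.1
        have h3 := (rpow_bdd β 4 (by norm_num) _ (hrange t ht)).2
        have h4 := (rpow_bdd β 4 (by norm_num) _ (hrange t' ht')).1
        have h5 : 0 < (4 : ℝ) ^ (-|β|) := by positivity
        linarith [h1.1, h2.2])
    refine this.trans ?_
    have e : (A + 2) / (1 / (4 * (Q : ℝ) ^ 2)) = 4 * (A + 2) * Q ^ 2 := by field_simp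
    rw [e]
    nlinarith
  have hcard := Finset.card_le_mul_card_image (f := Prod.snd) T
    ⌊64 * L * ρ * N ^ 2 / g ^ 2 + 1⌋₊ (by
      intro r _
      apply Nat.le_floor
      have := card_le_of_spaced (T.filter (fun t => t.2 = r))
        (fun t => (t.1.2 : ℝ) / t.1.1) s (4 * L * ρ) hs0 (by positivity) (by
          intro i hi j hj hij
          rw [Finset.mem_filter] at hi hj
          exact hspace i hi.1 j hj.1 (fun h => hij (Prod.ext h (hi.2.trans hj.2.symm)))) (by
          intro i hi j hj
          rw [Finset.mem_filter] at hi hj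
          have h1 := abs_le.1 (hT i hi.1).2.2.2.1
          have h2 := abs_le.1 (hT j hj.1).2.2.2.1
          rw [hi.2] at h1
          rw [hj.2] at h2
          have h3 := hLip _ (hrange i hi.1) _ (hrange j hj.1)
          have h4 : |((i.1.2 : ℝ) / i.1.1) ^ β - ((j.1.2 : ℝ) / j.1.1) ^ β| ≤ 2 * ρ := by
            rw [abs_le]; constructor <;> linarith [h1.1, h2.2, h1.2, h2.1]
          have h5 : L * |((i.1.2 : ℝ) / i.1.1) ^ β - ((j.1.2 : ℝ) / j.1.1) ^ β| ≤ L * (2 * ρ) := by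
            gcongr
          have h6 : 0 ≤ L * ρ := by positivity
          linarith [le_abs_self ((i.1.2 : ℝ) / i.1.1 - (j.1.2 : ℝ) / j.1.1)])
      refine this.trans (le_of_eq ?_)
      rw [hs]
      field_simp
      ring)
  have hgQ : (Q : ℝ) ≤ N / g := by
    rw [le_div_iff₀ (by positivity)]; linarith
  calc (T.card : ℝ) ≤ (⌊64 * L * ρ * N ^ 2 / g ^ 2 + 1⌋₊ : ℝ) * ((T.image Prod.snd).card : ℝ) := by
        exact_mod_cast hcard
    _ ≤ (64 * L * ρ * N ^ 2 / g ^ 2 + 1) * ((4 * (A + 2) + 1) * Q ^ 2) := by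
        apply mul_le_mul (Nat.floor_le (by positivity)) c1 (by positivity) (by positivity)
    _ = (4 * (A + 2) + 1) * (64 * L * (ρ * Q ^ 2) * (N ^ 2 / g ^ 2) + Q * Q) := by ring
    _ ≤ (4 * (A + 2) + 1) * (64 * L * (ρ * Q ^ 2) * (N ^ 2 / g) + Q * (N / g)) := by gcongr
    _ = (4 * (A + 2) + 1) * (64 * L * (ρ * Q ^ 2 * N ^ 2 / g) + N * Q / g) := by ring
    _ ≤ (4 * (A + 2) + 1) * ((64 * L + 1) * (ρ * Q ^ 2 * N ^ 2 / g) + (64 * L + 1) * (N * Q / g)) := by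
        gcongr (4 * (A + 2) + 1) * (?_ + ?_)
        · have : 0 ≤ ρ * Q ^ 2 * N ^ 2 / g := by positivity
          nlinarith
        · have : 0 ≤ (N : ℝ) * Q / g := by positivity
          nlinarith [mul_nonneg hL.le this]
    _ = ((4 * (A + 2) + 1) * (64 * L + 1)) * ((N : ℝ) * Q + ρ * Q ^ 2 * N ^ 2) / g := by ring
    _ ≤ _ := by gcongr; linarith

/-- The sum of `spacing_gcd` over all gcds, at the cost of a logarithm. -/
lemma spacing_count (β : ℝ) (hβ : β ≠ 0) :
    ∃ C : ℝ, 0 < C ∧ ∀ (N Q : ℕ) (ρ : ℝ) (T : Finset ((ℕ × ℕ) × ℚ)), 1 ≤ N → 1 ≤ Q → 0 ≤ ρ →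
      (∀ t ∈ T, (N ≤ t.1.1 ∧ t.1.1 < 4 * N) ∧ (N ≤ t.1.2 ∧ t.1.2 < 4 * N) ∧ t.2.den ≤ 2 * Q ∧
        |((t.1.2 : ℝ) / t.1.1) ^ β - t.2| ≤ ρ) →
      (T.card : ℝ) ≤ C * ((N : ℝ) * Q + ρ * Q ^ 2 * N ^ 2) * (1 + Real.log (4 * N)) := by
  obtain ⟨C, hC, h⟩ := spacing_gcd β hβ
  refine ⟨C, hC, fun N Q ρ T hN hQ hρ hT => ?_⟩
  have hmaps : Set.MapsTo (fun t : (ℕ × ℕ) × ℚ => t.1.1.gcd t.1.2) (T : Set ((ℕ × ℕ) × ℚ))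
      (Finset.Icc 1 (4 * N) : Finset ℕ) := by
    intro t ht
    obtain ⟨⟨a1, a2⟩, ⟨b1, b2⟩, -⟩ := hT t ht
    simp only [Finset.coe_Icc, Set.mem_Icc]
    exact ⟨Nat.gcd_pos_of_pos_left _ (by omega), (Nat.gcd_le_left _ (by omega)).trans a2.le⟩
  rw [Finset.card_eq_sum_card_fiberwise hmaps]
  push_cast
  have hharm : ∑ g ∈ Finset.Icc 1 (4 * N), (1 : ℝ) / g ≤ 1 + Real.log (4 * N) := by
    have := harmonic_le_one_add_log (4 * N)
    rw [harmonic_eq_sum_Icc] at this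
    push_cast at this
    simpa [one_div] using this
  calc _ ≤ ∑ g ∈ Finset.Icc 1 (4 * N), C * ((N : ℝ) * Q + ρ * Q ^ 2 * N ^ 2) * (1 / g) := by
        apply Finset.sum_le_sum
        intro g hg
        have := h N Q g ρ (T.filter (fun t => t.1.1.gcd t.1.2 = g)) hN hQ hρ
          (Finset.mem_Icc.1 hg).1 (by
            intro t ht
            rw [Finset.mem_filter] at ht
            obtain ⟨a, b, c, d⟩ := hT t ht.1
            exact ⟨a, b, c, d, ht.2⟩)
        rw [mul_one_div]
        exact this
    _ = C * ((N : ℝ) * Q + ρ * Q ^ 2 * N ^ 2) * ∑ g ∈ Finset.Icc 1 (4 * N), (1 : ℝ) / g := by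
        rw [Finset.mul_sum]
    _ ≤ _ := by gcongr

/-! ### Integer points near a hyperbola-like curve -/

/-- The chord between two points near `X = θY + μ/Y`, compared with the divided difference
`θ - μ / (Y Y')` of the curve. -/
lemma divdiff (θ μ δ Y Y' x x' : ℝ) (hY : 0 < Y) (hY' : 0 < Y')
    (h : |x - θ * Y - μ / Y| ≤ δ) (h' : |x' - θ * Y' - μ / Y'| ≤ δ) :
    |(x' - x) - (Y' - Y) * (θ - μ / (Y * Y'))| ≤ 2 * δ := by
  have e : (x' - x) - (Y' - Y) * (θ - μ / (Y * Y')) =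
      (x' - θ * Y' - μ / Y') - (x - θ * Y - μ / Y) := by
    field_simp; ring
  rw [e]
  exact (abs_sub _ _).trans (by linarith)

/-- Two chords whose endpoints lie in windows of length `W` are parallel: the determinant of their
direction vectors is an integer of absolute value less than `1`. -/
lemma chords_parallel (A W θ μ δ : ℝ) (hA : 0 < A) (hW : 0 < W) (hδ : 0 ≤ δ)
    (hsmall : 8 * |μ| * W ^ 3 / A ^ 3 + 4 * δ * W < 1)
    (Y Y' Z Z' x x' z z' : ℤ) (hY : A ≤ Y ∧ Y ≤ 4 * A) (hY' : A ≤ Y' ∧ Y' ≤ 4 * A)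
    (hZ : A ≤ Z ∧ Z ≤ 4 * A) (hZ' : A ≤ Z' ∧ Z' ≤ 4 * A)
    (hx : |(x : ℝ) - θ * Y - μ / Y| ≤ δ) (hx' : |(x' : ℝ) - θ * Y' - μ / Y'| ≤ δ)
    (hz : |(z : ℝ) - θ * Z - μ / Z| ≤ δ) (hz' : |(z' : ℝ) - θ * Z' - μ / Z'| ≤ δ)
    (h1 : |(Y' : ℝ) - Y| ≤ W) (h2 : |(Z' : ℝ) - Z| ≤ W)
    (h3 : |(Y : ℝ) - Z| ≤ W) (h4 : |(Y' : ℝ) - Z'| ≤ W) :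
    (x' - x) * (Z' - Z) = (z' - z) * (Y' - Y) := by
  have hY0 : (0 : ℝ) < Y := by linarith
  have hY0' : (0 : ℝ) < Y' := by linarith
  have hZ0 : (0 : ℝ) < Z := by linarith
  have hZ0' : (0 : ℝ) < Z' := by linarith
  have d1 := divdiff θ μ δ Y Y' x x' hY0 hY0' hx hx'
  have d2 := divdiff θ μ δ Z Z' z z' hZ0 hZ0' hz hz'
  have e : ((x' : ℝ) - x) * (Z' - Z) - (z' - z) * (Y' - Y) =
      ((x' - x) - (Y' - Y) * (θ - μ / (Y * Y'))) * (Z' - Z)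
      - ((z' - z) - (Z' - Z) * (θ - μ / (Z * Z'))) * (Y' - Y)
      + (Y' - Y) * (Z' - Z) * (μ * ((Y * Y' - Z * Z') / (Y * Y' * (Z * Z')))) := by
    field_simp; ring
  have b1 : |((x' : ℝ) - x - (Y' - Y) * (θ - μ / (Y * Y'))) * (Z' - Z)| ≤ 2 * δ * W := by
    rw [abs_mul]; gcongr
  have b2 : |((z' : ℝ) - z - (Z' - Z) * (θ - μ / (Z * Z'))) * (Y' - Y)| ≤ 2 * δ * W := by
    rw [abs_mul]; gcongr
  have b3 : |(Y : ℝ) * Y' - Z * Z'| ≤ 8 * A * W := by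
    have e : (Y : ℝ) * Y' - Z * Z' = Y * (Y' - Z') + Z' * (Y - Z) := by ring
    rw [e]
    refine (abs_add_le _ _).trans ?_
    rw [abs_mul, abs_mul, abs_of_pos hY0, abs_of_pos hZ0']
    calc (Y : ℝ) * |(Y' : ℝ) - Z'| + Z' * |(Y : ℝ) - Z| ≤ (4 * A) * W + (4 * A) * W := by
          gcongr
          · exact hY.2
          · exact hZ'.2
      _ = _ := by ring
  have b4 : |((Y : ℝ) * Y' - Z * Z') / (Y * Y' * (Z * Z'))| ≤ 8 * A * W / A ^ 4 := by
    rw [abs_div, abs_of_pos (by positivity : (0 : ℝ) < Y * Y' * (Z * Z'))]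
    apply div_le_div₀ (by positivity) b3 (by positivity)
    calc A ^ 4 = A * A * (A * A) := by ring
      _ ≤ _ := by
        gcongr
        · exact hY.1
        · exact hY'.1
        · exact hZ.1
        · exact hZ'.1
  have b5 : |((Y' : ℝ) - Y) * (Z' - Z) * (μ * ((Y * Y' - Z * Z') / (Y * Y' * (Z * Z'))))|
      ≤ 8 * |μ| * W ^ 3 / A ^ 3 := by
    rw [abs_mul, abs_mul, abs_mul μ]
    calc _ ≤ W * W * (|μ| * (8 * A * W / A ^ 4)) := by gcongr
      _ = _ := by field_simp
  have hlt : |((x' : ℝ) - x) * (Z' - Z) - (z' - z) * (Y' - Y)| < 1 := by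
    rw [e]
    refine lt_of_le_of_lt ((abs_add_le _ _).trans
      (add_le_add ((abs_sub _ _).trans (add_le_add b1 b2)) b5)) ?_
    linarith
  have hz : |(x' - x) * (Z' - Z) - (z' - z) * (Y' - Y)| < 1 := by exact_mod_cast hlt
  exact sub_eq_zero.1 (Int.abs_lt_one_iff.1 hz)

/-- Two chords with the same slope `r`, lying over `[Y₁, Y₂]` and `[Y₃, Y₄]`. The slope of the curve
moves monotonically away from or towards `θ`, at a rate governed by `μ`; equality of the two slopes
forces `μ` to be small, and eliminating it bounds `|θ - r|`. -/
lemma slope_close (A θ μ δ r q : ℝ) (hA : 0 < A) (hq : 0 < q) (hδ : 0 ≤ δ)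
    (Y₁ Y₂ Y₃ Y₄ x₁ x₂ x₃ x₄ : ℝ) (h1 : A ≤ Y₁) (h12 : Y₁ + q ≤ Y₂) (h23 : Y₂ ≤ Y₃)
    (h34 : Y₃ + q ≤ Y₄) (h4 : Y₄ ≤ 4 * A)
    (hx1 : |x₁ - θ * Y₁ - μ / Y₁| ≤ δ) (hx2 : |x₂ - θ * Y₂ - μ / Y₂| ≤ δ)
    (hx3 : |x₃ - θ * Y₃ - μ / Y₃| ≤ δ) (hx4 : |x₄ - θ * Y₄ - μ / Y₄| ≤ δ)
    (hr : x₂ - x₁ = r * (Y₂ - Y₁)) (hr' : x₄ - x₃ = r * (Y₄ - Y₃)) :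
    |θ - r| * (Y₃ - Y₁) * q ≤ 64 * δ * A := by
  have p1 : 0 < Y₁ := by linarith
  have p2 : 0 < Y₂ := by linarith
  have p3 : 0 < Y₃ := by linarith
  have p4 : 0 < Y₄ := by linarith
  have key : ∀ Y Y' x x' : ℝ, 0 < Y → Y + q ≤ Y' → Y ≤ 4 * A → Y' ≤ 4 * A →
      |x - θ * Y - μ / Y| ≤ δ → |x' - θ * Y' - μ / Y'| ≤ δ → x' - x = r * (Y' - Y) →
      |(θ - r) * (Y * Y') - μ| * q ≤ 32 * δ * A ^ 2 := by
    intro Y Y' x x' hY hYY hYA hYA' hx hx' hr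
    have hY' : 0 < Y' := by linarith
    have d := divdiff θ μ δ Y Y' x x' hY hY' hx hx'
    have e : x' - x - (Y' - Y) * (θ - μ / (Y * Y')) =
        -((θ - r) * (Y * Y') - μ) * ((Y' - Y) / (Y * Y')) := by
      rw [hr]; field_simp; ring
    have hp : 0 < (Y' - Y) / (Y * Y') := div_pos (by linarith) (by positivity)
    rw [e, abs_mul, abs_neg, abs_of_pos hp, ← mul_div_assoc,
      div_le_iff₀ (by positivity)] at d
    calc |(θ - r) * (Y * Y') - μ| * q ≤ |(θ - r) * (Y * Y') - μ| * (Y' - Y) := by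
          gcongr; linarith
      _ ≤ 2 * δ * (Y * Y') := d
      _ ≤ 2 * δ * ((4 * A) * (4 * A)) := by gcongr
      _ = _ := by ring
  have k1 := key Y₁ Y₂ x₁ x₂ p1 h12 (by linarith) (by linarith) hx1 hx2 hr
  have k2 := key Y₃ Y₄ x₃ x₄ p3 h34 (by linarith) h4 hx3 hx4 hr'
  have k3 : |(θ - r) * (Y₃ * Y₄ - Y₁ * Y₂)| * q ≤ 64 * δ * A ^ 2 := by
    have e : (θ - r) * (Y₃ * Y₄ - Y₁ * Y₂) =
        ((θ - r) * (Y₃ * Y₄) - μ) - ((θ - r) * (Y₁ * Y₂) - μ) := by ring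
    rw [e]
    calc _ ≤ (|(θ - r) * (Y₃ * Y₄) - μ| + |(θ - r) * (Y₁ * Y₂) - μ|) * q := by
          gcongr; exact abs_sub _ _
      _ ≤ _ := by linarith
  have hd : A * (Y₃ - Y₁) ≤ Y₃ * Y₄ - Y₁ * Y₂ := by nlinarith
  have hd0 : 0 ≤ A * (Y₃ - Y₁) := mul_nonneg hA.le (by linarith)
  rw [abs_mul, abs_of_nonneg (hd0.trans hd)] at k3
  have : |θ - r| * (A * (Y₃ - Y₁)) * q ≤ 64 * δ * A ^ 2 := by
    refine le_trans ?_ k3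
    gcongr
  have h' : A * (|θ - r| * (Y₃ - Y₁) * q) ≤ A * (64 * δ * A) := by
    calc _ = |θ - r| * (A * (Y₃ - Y₁)) * q := by ring
      _ ≤ _ := this
      _ = _ := by ring
  exact le_of_mul_le_mul_left h' hA

/-- Integer points close to `X = θY + μ/Y`. Apart from two points per window of length `W` they are
counted by rational approximations to `θ`: the members of `R j` are the slopes shared by at least
`j` (and at least two) chords between consecutive points in one window. -/
lemma points_near_curve (A : ℕ) (W θ μ δ : ℝ) (hA : 0 < A) (hW : 0 < W) (hδ : 0 ≤ δ)
    (hsmall : 8 * |μ| * W ^ 3 / (A : ℝ) ^ 3 + 4 * δ * W < 1)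
    (S : Finset ℕ) (x : ℕ → ℤ) (hS : ∀ Y ∈ S, A ≤ Y ∧ Y ≤ 4 * A)
    (hx : ∀ Y ∈ S, |(x Y : ℝ) - θ * Y - μ / Y| ≤ δ) :
    ∃ R : ℕ → Finset ℚ,
      (∀ j, 1 ≤ j → ∀ r ∈ R j, r.den * j ≤ 6 * A ∧ |θ - r| ≤ 128 * δ * A / (r.den ^ 2 * j)) ∧
      (S.card : ℝ) ≤ 2 * (4 * A / W + 1) + ∑ j ∈ Finset.Icc 1 (6 * A), ((R j).card : ℝ) := by
  classical
  set win : ℕ → ℕ := fun Y => ⌊(Y : ℝ) / W⌋₊ with hwin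
  have hmono : ∀ Y Z, Y ≤ Z → win Y ≤ win Z := by
    intro Y Z h
    apply Nat.floor_le_floor
    gcongr
  have hclose : ∀ Y Z, win Y = win Z → |(Y : ℝ) - Z| ≤ W := by
    intro Y Z h
    have h1 := Nat.floor_le (by positivity : 0 ≤ (Y : ℝ) / W)
    have h2 := Nat.lt_floor_add_one ((Y : ℝ) / W)
    have h3 := Nat.floor_le (by positivity : 0 ≤ (Z : ℝ) / W)
    have h4 := Nat.lt_floor_add_one ((Z : ℝ) / W)
    simp only [hwin] at h
    rw [h] at h1 h2
    have : |((Y : ℝ) - Z) / W| ≤ 1 := by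
      rw [abs_le, sub_div]; constructor <;> linarith
    rwa [abs_div, abs_of_pos hW, div_le_one hW] at this
  -- points that are not the last one in their window
  set E : Finset ℕ := S.filter (fun Y => ∃ Z ∈ S, Y < Z ∧ win Y = win Z) with hE
  have hES : ∀ Y ∈ E, Y ∈ S := fun Y hY => (Finset.mem_filter.1 hY).1
  have hnext : ∀ Y ∈ E, ∃ Z ∈ S, Y < Z ∧ win Y = win Z ∧ ∀ V ∈ S, Y < V → Z ≤ V := by
    intro Y hY
    obtain ⟨hYS, Z, hZ, hYZ, hw⟩ := Finset.mem_filter.1 hY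
    obtain ⟨U, hU, hmin⟩ := (S.filter (fun V => Y < V)).exists_min_image id
      ⟨Z, Finset.mem_filter.2 ⟨hZ, hYZ⟩⟩
    rw [Finset.mem_filter] at hU
    refine ⟨U, hU.1, hU.2, ?_, fun V hV hYV => hmin V (Finset.mem_filter.2 ⟨hV, hYV⟩)⟩
    exact le_antisymm (hmono _ _ hU.2.le)
      (hw ▸ hmono _ _ (hmin Z (Finset.mem_filter.2 ⟨hZ, hYZ⟩)))
  -- `nx Y` is the point following `Y`
  choose! nx hnxS hnxlt hnxwin hnxmin using hnext
  -- the windows that meet the range of `Y`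
  have hwinmem : ∀ Y ∈ S, win Y ∈ Finset.range (⌊4 * A / W⌋₊ + 1) := by
    intro Y hY
    rw [Finset.mem_range, Nat.lt_succ_iff]
    apply Nat.floor_le_floor
    gcongr
    exact_mod_cast (hS Y hY).2
  have hwincard : ((Finset.range (⌊4 * A / W⌋₊ + 1)).card : ℝ) ≤ 4 * A / W + 1 := by
    rw [Finset.card_range]; push_cast
    linarith [Nat.floor_le (by positivity : 0 ≤ 4 * A / W)]
  have hcompl : ((S \ E).card : ℝ) ≤ 4 * A / W + 1 := by
    refine le_trans ?_ hwincard
    have := Finset.card_le_card_of_injOn (s := S \ E) (t := Finset.range (⌊4 * A / W⌋₊ + 1)) win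
      (fun Y hY => hwinmem Y (Finset.mem_sdiff.1 hY).1) (by
        intro Y hY Z hZ h
        rw [Finset.mem_coe, Finset.mem_sdiff] at hY hZ
        rcases lt_trichotomy Y Z with hlt | heq | hlt
        · exact absurd (Finset.mem_filter.2 ⟨hY.1, Z, hZ.1, hlt, h⟩) hY.2
        · exact heq
        · exact absurd (Finset.mem_filter.2 ⟨hZ.1, Y, hY.1, hlt, h.symm⟩) hZ.2)
    exact_mod_cast this
  set sl : ℕ → ℚ := fun Y => ((x (nx Y) - x Y : ℤ) : ℚ) / ((nx Y - Y : ℤ) : ℚ) with hsl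
  have hpos : ∀ Y ∈ E, (0 : ℤ) < (nx Y : ℤ) - Y := fun Y hY => by
    have := hnxlt Y hY; omega
  have hslope : ∀ Y ∈ E, ((x (nx Y) : ℝ) - x Y) = (sl Y : ℝ) * ((nx Y : ℝ) - Y) := by
    intro Y hY
    have h := hpos Y hY
    have h' : ((nx Y : ℝ) - Y) ≠ 0 := by
      have : (0 : ℝ) < (nx Y : ℝ) - Y := by exact_mod_cast h
      exact this.ne'
    simp only [hsl]
    push_cast
    field_simp
  have hden : ∀ Y ∈ E, Y + (sl Y).den ≤ nx Y := by
    intro Y hY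
    have h := hpos Y hY
    have hd : ((sl Y).den : ℤ) ∣ ((nx Y : ℤ) - Y) := by
      simp only [hsl]
      rw [← Rat.divInt_eq_div]
      exact Rat.den_dvd _ _
    have := Int.le_of_dvd h hd
    omega
  have hA' : ∀ Y ∈ S, (A : ℝ) ≤ ((Y : ℤ) : ℝ) ∧ ((Y : ℤ) : ℝ) ≤ 4 * A := fun Y hY => by
    have := hS Y hY
    exact ⟨by exact_mod_cast this.1, by exact_mod_cast this.2⟩
  have hx' : ∀ Y ∈ S, |(x Y : ℝ) - θ * ((Y : ℤ) : ℝ) - μ / ((Y : ℤ) : ℝ)| ≤ δ := by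
    simpa using hx
  have hsame : ∀ Y ∈ E, ∀ Z ∈ E, win Y = win Z → sl Y = sl Z := by
    intro Y hY Z hZ h
    have hc := chords_parallel A W θ μ δ (by exact_mod_cast hA) hW hδ hsmall Y (nx Y) Z (nx Z)
      (x Y) (x (nx Y)) (x Z) (x (nx Z)) (hA' _ (hES _ hY)) (hA' _ (hnxS _ hY))
      (hA' _ (hES _ hZ)) (hA' _ (hnxS _ hZ)) (hx' _ (hES _ hY)) (hx' _ (hnxS _ hY))
      (hx' _ (hES _ hZ)) (hx' _ (hnxS _ hZ))
      (by simpa using hclose _ _ (hnxwin Y hY).symm) (by simpa using hclose _ _ (hnxwin Z hZ).symm)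
      (by simpa using hclose _ _ h)
      (by simpa using hclose _ _ ((hnxwin Y hY).symm.trans (h.trans (hnxwin Z hZ))))
    simp only [hsl]
    have h1 : (((nx Y : ℤ) - Y : ℤ) : ℚ) ≠ 0 := by exact_mod_cast (hpos Y hY).ne'
    have h2 : (((nx Z : ℤ) - Z : ℤ) : ℚ) ≠ 0 := by exact_mod_cast (hpos Z hZ).ne'
    rw [div_eq_div_iff h1 h2]
    exact_mod_cast hc
  have himage : ((E.image sl).card : ℝ) ≤ 4 * A / W + 1 := by
    refine le_trans ?_ hwincard
    have h1 : (E.image sl).card ≤ (E.image win).card := by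
      have : ∃ ρ : ℕ → ℚ, ∀ Y ∈ E, sl Y = ρ (win Y) := by
        refine ⟨fun w => if h : ∃ Y ∈ E, win Y = w then sl h.choose else 0, fun Y hY => ?_⟩
        have h : ∃ Z ∈ E, win Z = win Y := ⟨Y, hY, rfl⟩
        simp only [dif_pos h]
        exact hsame _ hY _ h.choose_spec.1 h.choose_spec.2.symm
      obtain ⟨ρ, hρ⟩ := this
      have e : E.image sl = (E.image win).image ρ := by
        rw [Finset.image_image]
        exact Finset.image_congr (fun Y hY => hρ Y hY)
      rw [e]
      exact Finset.card_image_le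
    have h2 : (E.image win).card ≤ (Finset.range (⌊4 * A / W⌋₊ + 1)).card := by
      apply Finset.card_le_card
      intro w hw
      obtain ⟨Y, hY, rfl⟩ := Finset.mem_image.1 hw
      exact hwinmem Y (hES Y hY)
    exact_mod_cast h1.trans h2
  set F : ℚ → Finset ℕ := fun r => E.filter (fun Y => sl Y = r) with hF
  -- the elements of a fibre are spaced by at least the denominator of the slope
  have hfib : ∀ r, 2 ≤ (F r).card → ∃ Y₁ ∈ F r, ∃ Y₃ ∈ F r, Y₁ < Y₃ ∧
      r.den * ((F r).card - 1) ≤ Y₃ - Y₁ := by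
    intro r hr
    have hne : (F r).Nonempty := Finset.card_pos.1 (by omega)
    refine ⟨(F r).min' hne, Finset.min'_mem _ _, (F r).max' hne, Finset.max'_mem _ _,
      Finset.min'_lt_max'_of_card _ (by omega), ?_⟩
    set Y₁ := (F r).min' hne
    set Y₃ := (F r).max' hne
    have h1 : ∀ Y ∈ F r, ∀ Z ∈ F r, Y < Z → Y + r.den ≤ Z := by
      intro Y hY Z hZ hYZ
      rw [hF, Finset.mem_filter] at hY hZ
      have := hden Y hY.1
      rw [hY.2] at this
      exact this.trans (hnxmin Y hY.1 Z (hES Z hZ.1) hYZ)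
    have hq : 0 < r.den := r.den_pos
    have := Finset.card_le_card_of_injOn (s := F r)
      (t := Finset.range ((Y₃ - Y₁) / r.den + 1)) (fun Y => (Y - Y₁) / r.den) (by
        intro Y hY
        simp only [Finset.coe_range, Set.mem_Iio, Nat.lt_succ_iff]
        apply Nat.div_le_div_right
        have := (F r).le_max' Y hY
        omega) (by
        intro Y hY Z hZ h
        simp only at h
        have e1 := (F r).min'_le Y hY
        have e2 := (F r).min'_le Z hZ
        change Y₁ ≤ Y at e1
        change Y₁ ≤ Z at e2
        by_contra hne
        rcases lt_or_gt_of_ne hne with hlt | hlt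
        · have h3 := h1 Y hY Z hZ hlt
          have : (Y - Y₁) / r.den + 1 ≤ (Z - Y₁) / r.den := by
            rw [← Nat.add_div_right _ hq]
            apply Nat.div_le_div_right; omega
          omega
        · have h3 := h1 Z hZ Y hY hlt
          have : (Z - Y₁) / r.den + 1 ≤ (Y - Y₁) / r.den := by
            rw [← Nat.add_div_right _ hq]
            apply Nat.div_le_div_right; omega
          omega)
    rw [Finset.card_range] at this
    calc r.den * ((F r).card - 1) ≤ r.den * ((Y₃ - Y₁) / r.den) := by
          apply Nat.mul_le_mul_left; omega
      _ ≤ _ := Nat.mul_div_le _ _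
  have hfibbound : ∀ r, 2 ≤ (F r).card → r.den * (F r).card ≤ 6 * A ∧
      |θ - r| * (r.den ^ 2 * (F r).card) ≤ 128 * δ * A := by
    intro r hr
    obtain ⟨Y₁, hY1, Y₃, hY3, hlt, hle⟩ := hfib r hr
    rw [hF, Finset.mem_filter] at hY1 hY3
    have hY1S := hES _ hY1.1
    have hY3S := hES _ hY3.1
    have b1 := hS _ hY1S
    have b3 := hS _ hY3S
    have hcard : (F r).card ≤ 2 * ((F r).card - 1) := by omega
    have hdn : r.den * (F r).card ≤ 2 * (Y₃ - Y₁) := by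
      calc r.den * (F r).card ≤ r.den * (2 * ((F r).card - 1)) := Nat.mul_le_mul_left _ hcard
        _ = 2 * (r.den * ((F r).card - 1)) := by ring
        _ ≤ _ := by omega
    refine ⟨by omega, ?_⟩
    have d1 := hden _ hY1.1
    have d3 := hden _ hY3.1
    have s1 := hslope _ hY1.1
    have s3 := hslope _ hY3.1
    rw [hY1.2] at d1 s1
    rw [hY3.2] at d3 s3
    have hq : (0 : ℝ) < r.den := by exact_mod_cast r.den_pos
    have hc := slope_close A θ μ δ r r.den (by exact_mod_cast hA) hq hδ
      Y₁ (nx Y₁) Y₃ (nx Y₃) (x Y₁) (x (nx Y₁)) (x Y₃) (x (nx Y₃)) (by exact_mod_cast b1.1)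
      (by exact_mod_cast d1) (by exact_mod_cast hnxmin _ hY1.1 _ hY3S hlt) (by exact_mod_cast d3)
      (by exact_mod_cast (hS _ (hnxS _ hY3.1)).2) (hx _ hY1S) (hx _ (hnxS _ hY1.1)) (hx _ hY3S)
      (hx _ (hnxS _ hY3.1)) s1 s3
    have hdnR : (r.den : ℝ) * (F r).card ≤ 2 * ((Y₃ : ℝ) - Y₁) := by
      have h : ((r.den * (F r).card : ℕ) : ℝ) ≤ ((2 * (Y₃ - Y₁) : ℕ) : ℝ) := by exact_mod_cast hdn
      push_cast [Nat.cast_sub hlt.le] at h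
      exact h
    calc |θ - r| * ((r.den : ℝ) ^ 2 * (F r).card)
        = |θ - r| * (r.den * (F r).card) * r.den := by ring
      _ ≤ |θ - r| * (2 * ((Y₃ : ℝ) - Y₁)) * r.den := by gcongr
      _ = 2 * (|θ - r| * ((Y₃ : ℝ) - Y₁) * r.den) := by ring
      _ ≤ _ := by linarith
  refine ⟨fun j => (E.image sl).filter (fun r => 2 ≤ (F r).card ∧ j ≤ (F r).card), ?_, ?_⟩
  · intro j hj r hr
    obtain ⟨-, h2, hjn⟩ := Finset.mem_filter.1 hr
    obtain ⟨c1, c2⟩ := hfibbound r h2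
    refine ⟨(Nat.mul_le_mul_left _ hjn).trans c1, ?_⟩
    have hq : (0 : ℝ) < r.den := by exact_mod_cast r.den_pos
    have hj0 : (0 : ℝ) < j := by exact_mod_cast hj
    rw [le_div_iff₀ (by positivity)]
    refine le_trans ?_ c2
    gcongr
  · have hcE : E.card = ∑ r ∈ E.image sl, (F r).card :=
      Finset.card_eq_sum_card_image sl E
    have hn : ∀ r ∈ E.image sl, (F r).card ≤
        1 + ∑ j ∈ Finset.Icc 1 (6 * A), (if 2 ≤ (F r).card ∧ j ≤ (F r).card then 1 else 0) := by
      intro r _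
      by_cases h2 : 2 ≤ (F r).card
      · have hle : (F r).card ≤ 6 * A := by
          have := (hfibbound r h2).1
          calc (F r).card = 1 * (F r).card := (one_mul _).symm
            _ ≤ r.den * (F r).card := Nat.mul_le_mul_right _ r.den_pos
            _ ≤ _ := this
        have : (Finset.Icc 1 (F r).card).card ≤
            ((Finset.Icc 1 (6 * A)).filter (fun j => 2 ≤ (F r).card ∧ j ≤ (F r).card)).card := by
          apply Finset.card_le_card
          intro j hj
          rw [Finset.mem_Icc] at hj
          rw [Finset.mem_filter, Finset.mem_Icc]
          exact ⟨⟨hj.1, hj.2.trans hle⟩, h2, hj.2⟩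
        rw [Nat.card_Icc] at this
        rw [← Finset.card_filter]
        omega
      · omega
    have hsum : E.card ≤ (E.image sl).card + ∑ j ∈ Finset.Icc 1 (6 * A),
        ((E.image sl).filter (fun r => 2 ≤ (F r).card ∧ j ≤ (F r).card)).card := by
      rw [hcE]
      refine (Finset.sum_le_sum hn).trans (le_of_eq ?_)
      rw [Finset.sum_add_distrib, Finset.sum_comm]
      simp only [Finset.sum_const, smul_eq_mul, mul_one, Finset.card_filter]
    have hSE : S.card = (S \ E).card + E.card := by
      rw [Finset.card_sdiff_add_card_eq_card (Finset.filter_subset _ _)]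
    have hsumR : (E.card : ℝ) ≤ ((E.image sl).card : ℝ) + ∑ j ∈ Finset.Icc 1 (6 * A),
        (((E.image sl).filter (fun r => 2 ≤ (F r).card ∧ j ≤ (F r).card)).card : ℝ) := by
      exact_mod_cast hsum
    have : (S.card : ℝ) = ((S \ E).card : ℝ) + E.card := by exact_mod_cast hSE
    rw [this]
    linarith

/-! ### Expansion of the third difference -/

/-- The generalised binomial coefficient `γ (γ - 1) ⋯ (γ - k + 1) / k!`. -/
noncomputable def binCoeff : ℕ → ℝ → ℝ
  | 0, _ => 1
  | k + 1, γ => γ / (k + 1) * binCoeff k (γ - 1)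

/-- The binomial expansion to order `k`, uniformly for `|s| ≤ 1/2`, by induction through the
derivative. -/
lemma binomial_taylor (k : ℕ) : ∀ γ : ℝ, ∃ C : ℝ, 0 < C ∧ ∀ s : ℝ, |s| ≤ 1 / 2 →
    |(1 + s) ^ γ - ∑ i ∈ Finset.range k, binCoeff i γ * s ^ i| ≤ C * |s| ^ k := by
  induction k with
  | zero =>
    intro γ
    obtain ⟨L, hL, h⟩ := rpow_lipschitz γ (1 / 2) (3 / 2) (by norm_num)
    refine ⟨1 + L, by positivity, fun s hs => ?_⟩
    have hs' := abs_le.1 hs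
    have := h (1 + s) ⟨by linarith, by linarith⟩ 1 ⟨by norm_num, by norm_num⟩
    rw [Real.one_rpow, add_sub_cancel_left] at this
    have h3 : L * |s| ≤ L * (1 / 2) := by gcongr
    have h4 := abs_le.1 (this.trans h3)
    simp only [Finset.range_zero, Finset.sum_empty, sub_zero, pow_zero, mul_one]
    rw [abs_le]; constructor <;> linarith
  | succ k ih =>
    intro γ
    obtain ⟨C, hC, h⟩ := ih (γ - 1)
    refine ⟨|γ| * C + 1, by positivity, fun s hs => ?_⟩
    have hder : ∀ u ∈ Set.Icc (-|s|) |s|, HasDerivWithinAt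
        (fun u : ℝ => (1 + u) ^ γ - ∑ i ∈ Finset.range (k + 1), binCoeff i γ * u ^ i)
        (γ * ((1 + u) ^ (γ - 1) - ∑ i ∈ Finset.range k, binCoeff i (γ - 1) * u ^ i))
        (Set.Icc (-|s|) |s|) u := by
      intro u hu
      apply HasDerivAt.hasDerivWithinAt
      have hu0 : 1 + u ≠ 0 := by
        have := hu.1; intro; linarith
      have h1 : HasDerivAt (fun u : ℝ => (1 + u) ^ γ) (γ * (1 + u) ^ (γ - 1)) u := by
        have := ((hasDerivAt_id u).const_add 1).rpow_const (p := γ) (Or.inl hu0)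
        simpa using this
      have h2 : HasDerivAt (fun u : ℝ => ∑ i ∈ Finset.range (k + 1), binCoeff i γ * u ^ i)
          (∑ i ∈ Finset.range (k + 1), binCoeff i γ * (i * u ^ (i - 1))) u := by
        apply HasDerivAt.fun_sum
        intro i _
        exact (hasDerivAt_pow i u).const_mul _
      have h3 := h1.fun_sub h2
      convert h3 using 1
      rw [Finset.sum_range_succ', mul_sub, Finset.mul_sum]
      simp only [Nat.cast_zero, zero_mul, mul_zero, add_zero]
      congr 1
      apply Finset.sum_congr rfl
      intro i _
      rw [binCoeff]
      have : (i : ℝ) + 1 ≠ 0 := by positivity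
      push_cast
      field_simp
    have hb : ∀ u ∈ Set.Icc (-|s|) |s|,
        ‖γ * ((1 + u) ^ (γ - 1) - ∑ i ∈ Finset.range k, binCoeff i (γ - 1) * u ^ i)‖ ≤
          |γ| * (C * |s| ^ k) := by
      intro u hu
      rw [Real.norm_eq_abs, abs_mul]
      have hus : |u| ≤ |s| := abs_le.2 hu
      have := h u (hus.trans hs)
      calc _ ≤ |γ| * (C * |u| ^ k) := by gcongr
        _ ≤ _ := by gcongr
    have := (convex_Icc (-|s|) |s|).norm_image_sub_le_of_norm_hasDerivWithin_le hder hb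
      (x := 0) (y := s) (by simp) ⟨neg_abs_le s, le_abs_self s⟩
    have e0 : ((1 : ℝ) + 0) ^ γ - ∑ i ∈ Finset.range (k + 1), binCoeff i γ * 0 ^ i = 0 := by
      rw [Finset.sum_range_succ']
      simp [binCoeff]
    simp only [e0, sub_zero, Real.norm_eq_abs] at this
    calc _ ≤ |γ| * (C * |s| ^ k) * |s| := this
      _ = (|γ| * C) * |s| ^ (k + 1) := by ring
      _ ≤ _ := by gcongr; linarith

/-- The binomial expansion for odd differences: even powers cancel, so three terms already leave a
remainder of order five. -/
lemma odd_taylor (γ : ℝ) : ∃ C : ℝ, 0 < C ∧ ∀ s : ℝ, |s| ≤ 1 / 2 →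
    |(1 + s) ^ γ - (1 - s) ^ γ - 2 * γ * s - γ * (γ - 1) * (γ - 2) / 3 * s ^ 3| ≤ C * |s| ^ 5 := by
  obtain ⟨C, hC, h⟩ := binomial_taylor 5 γ
  refine ⟨2 * C, by positivity, fun s hs => ?_⟩
  have h1 := h s hs
  have h2 := h (-s) (by rwa [abs_neg])
  rw [abs_neg] at h2
  have e : (1 + s) ^ γ - (1 - s) ^ γ - 2 * γ * s - γ * (γ - 1) * (γ - 2) / 3 * s ^ 3 =
    ((1 + s) ^ γ - ∑ i ∈ Finset.range 5, binCoeff i γ * s ^ i) -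
    ((1 + -s) ^ γ - ∑ i ∈ Finset.range 5, binCoeff i γ * (-s) ^ i) := by
    simp only [Finset.sum_range_succ, Finset.sum_range_zero, binCoeff]
    rw [← sub_eq_add_neg]
    push_cast
    ring
  rw [e]
  refine (abs_sub _ _).trans ?_
  linarith

/-- The third difference about its centre, with `a, b` half the relative increments. The error
carries the factor `ab`: it is obtained by integrating `odd_taylor` from `b - a` to `b + a`. -/
lemma even_diff (α : ℝ) : ∃ C : ℝ, 0 < C ∧ ∀ a b : ℝ, 0 < a → a ≤ 2 * b → a + b ≤ 1 / 2 →
    |((1 + (a + b)) ^ α + (1 - (a + b)) ^ α - (1 + (b - a)) ^ α - (1 - (b - a)) ^ α)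
      - 4 * α * (α - 1) * (a * b)
      - 2 * α * (α - 1) * (α - 2) * (α - 3) / 3 * (a * b) * (a ^ 2 + b ^ 2)| ≤ C * (a * b) * b ^ 4 := by
  obtain ⟨C, hC, h⟩ := odd_taylor (α - 1)
  refine ⟨2 * (|α| * C * 243) + 1, by positivity, fun a b ha hab hs => ?_⟩
  have hb : 0 < b := by linarith
  set g : ℝ → ℝ := fun u => (1 + u) ^ α + (1 - u) ^ α - α * (α - 1) * u ^ 2
    - α * (α - 1) * (α - 2) * (α - 3) / 12 * u ^ 4 with hg
  have hder : ∀ u ∈ Set.Icc (-(a + b)) (a + b), HasDerivWithinAt g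
      (α * ((1 + u) ^ (α - 1) - (1 - u) ^ (α - 1) - 2 * (α - 1) * u
        - (α - 1) * ((α - 1) - 1) * ((α - 1) - 2) / 3 * u ^ 3)) (Set.Icc (-(a + b)) (a + b)) u := by
    intro u hu
    apply HasDerivAt.hasDerivWithinAt
    have hu0 : 1 + u ≠ 0 := by have := hu.1; intro; linarith
    have hu1 : 1 - u ≠ 0 := by have := hu.2; intro; linarith
    have h1 := ((hasDerivAt_id u).const_add 1).rpow_const (p := α) (Or.inl hu0)
    have h2 := ((hasDerivAt_id u).const_sub 1).rpow_const (p := α) (Or.inl hu1)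
    have h3 := (hasDerivAt_pow 2 u).const_mul (α * (α - 1))
    have h4 := (hasDerivAt_pow 4 u).const_mul (α * (α - 1) * (α - 2) * (α - 3) / 12)
    have h5 : HasDerivAt g _ u := ((h1.fun_add h2).fun_sub h3).fun_sub h4
    refine h5.congr_deriv ?_
    simp only [id]
    push_cast
    ring
  have hbd : ∀ u ∈ Set.Icc (-(a + b)) (a + b),
      ‖α * ((1 + u) ^ (α - 1) - (1 - u) ^ (α - 1) - 2 * (α - 1) * u
        - (α - 1) * ((α - 1) - 1) * ((α - 1) - 2) / 3 * u ^ 3)‖ ≤ |α| * (C * (a + b) ^ 5) := by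
    intro u hu
    rw [Real.norm_eq_abs, abs_mul]
    have hus : |u| ≤ a + b := abs_le.2 hu
    have := h u (hus.trans hs)
    calc _ ≤ |α| * (C * |u| ^ 5) := by gcongr
      _ ≤ _ := by gcongr
  have := (convex_Icc (-(a + b)) (a + b)).norm_image_sub_le_of_norm_hasDerivWithin_le hder hbd
    (x := b - a) (y := a + b) ⟨by linarith, by linarith⟩ ⟨by linarith, by linarith⟩
  have e : ((1 + (a + b)) ^ α + (1 - (a + b)) ^ α - (1 + (b - a)) ^ α - (1 - (b - a)) ^ α)
      - 4 * α * (α - 1) * (a * b)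
      - 2 * α * (α - 1) * (α - 2) * (α - 3) / 3 * (a * b) * (a ^ 2 + b ^ 2)
      = g (a + b) - g (b - a) := by
    simp only [hg]; ring
  rw [e]
  have e2 : ‖a + b - (b - a)‖ = 2 * a := by
    rw [Real.norm_eq_abs, show a + b - (b - a) = 2 * a by ring, abs_of_pos (by positivity)]
  rw [e2, Real.norm_eq_abs] at this
  calc _ ≤ |α| * (C * (a + b) ^ 5) * (2 * a) := this
    _ ≤ |α| * (C * (3 * b) ^ 5) * (2 * a) := by gcongr; linarith
    _ = (2 * (|α| * C * 243)) * (a * b) * b ^ 4 := by ring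
    _ ≤ _ := by gcongr; linarith

/-- The third difference written as an exact monomial `4α(α-1)ab σ ^ (α-2)`, with `σ` expanded to
fourth order. -/
lemma diff_scaled (α : ℝ) (h0 : α ≠ 0) (h1 : α ≠ 1) (h2 : α ≠ 2) :
    ∃ c C : ℝ, 0 < c ∧ 0 < C ∧ ∀ a b : ℝ, 0 < a → a ≤ 2 * b → b ≤ c →
      ∃ σ : ℝ, 1 / 2 ≤ σ ∧ σ ≤ 2 ∧
        (1 + (a + b)) ^ α + (1 - (a + b)) ^ α - (1 + (b - a)) ^ α - (1 - (b - a)) ^ α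
          = 4 * α * (α - 1) * (a * b) * σ ^ (α - 2) ∧
        |σ - 1 - (α - 3) / 6 * (a ^ 2 + b ^ 2)| ≤ C * b ^ 4 := by
  obtain ⟨C₁, hC₁, hd⟩ := even_diff α
  obtain ⟨C₂, hC₂, ht⟩ := binomial_taylor 2 (α - 2)⁻¹
  have hα : 0 < |4 * α * (α - 1)| := by
    have : α - 1 ≠ 0 := sub_ne_zero.2 h1
    positivity
  have hα2 : α - 2 ≠ 0 := sub_ne_zero.2 h2
  set K : ℝ := C₁ / |4 * α * (α - 1)| with hK
  have hK0 : 0 < K := by positivity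
  set κ : ℝ := (α - 2) * (α - 3) / 6 with hκ
  set B : ℝ := 5 * |κ| + K with hB
  have hB0 : 0 < B := by positivity
  set β := (α - 2)⁻¹ with hβ
  set C : ℝ := C₂ * B ^ 2 + |β| * K with hCdef
  have hC0 : 0 < C := by positivity
  set G : ℝ := 5 * |(α - 3) / 6| + C with hG
  have hG0 : 0 < G := by positivity
  refine ⟨min (1 / 6) (min (1 / (2 * B)) (1 / (2 * G))), C, by positivity, hC0, ?_⟩
  intro a b ha hab hbc
  have hb : 0 < b := by linarith
  have hb6 : b ≤ 1 / 6 := hbc.trans (min_le_left _ _)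
  have hbB : b * B ≤ 1 / 2 := by
    have := hbc.trans ((min_le_right _ _).trans (min_le_left _ _))
    rw [le_div_iff₀ (by positivity)] at this; linarith
  have hbG : b * G ≤ 1 / 2 := by
    have := hbc.trans ((min_le_right _ _).trans (min_le_right _ _))
    rw [le_div_iff₀ (by positivity)] at this; linarith
  have h5 : a ^ 2 + b ^ 2 ≤ 5 * b ^ 2 := by nlinarith
  have hb42 : b ^ 4 ≤ b ^ 2 := by
    apply pow_le_pow_of_le_one hb.le (by linarith) (by norm_num)
  have hb2 : b ^ 2 ≤ b := by nlinarith
  have hD := hd a b ha hab (by linarith)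
  set D := (1 + (a + b)) ^ α + (1 - (a + b)) ^ α - (1 + (b - a)) ^ α - (1 - (b - a)) ^ α
  have hne : 4 * α * (α - 1) ≠ 0 := abs_pos.1 hα
  have hab0 : 0 < a * b := by positivity
  set w : ℝ := D / (4 * α * (α - 1) * (a * b)) - 1 with hw
  have hDw : D = 4 * α * (α - 1) * (a * b) * (1 + w) := by
    rw [hw]; field_simp; ring
  have hw1 : |w - κ * (a ^ 2 + b ^ 2)| ≤ K * b ^ 4 := by
    have e : D - 4 * α * (α - 1) * (a * b)
      - 2 * α * (α - 1) * (α - 2) * (α - 3) / 3 * (a * b) * (a ^ 2 + b ^ 2)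
      = 4 * α * (α - 1) * (a * b) * (w - κ * (a ^ 2 + b ^ 2)) := by
      rw [hDw, hκ]; ring
    rw [e, abs_mul, abs_mul, abs_of_pos hab0] at hD
    rw [show K * b ^ 4 = C₁ * b ^ 4 / |4 * α * (α - 1)| by rw [hK]; ring, le_div_iff₀ hα]
    have : (|4 * α * (α - 1)| * |w - κ * (a ^ 2 + b ^ 2)|) * (a * b) ≤ (C₁ * b ^ 4) * (a * b) := by
      linarith
    have := le_of_mul_le_mul_right this hab0
    linarith
  have hw2 : |w| ≤ B * b ^ 2 := by
    have e : w = (w - κ * (a ^ 2 + b ^ 2)) + κ * (a ^ 2 + b ^ 2) := by ring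
    rw [e]
    refine (abs_add_le _ _).trans ?_
    rw [abs_mul, abs_of_nonneg (by positivity : 0 ≤ a ^ 2 + b ^ 2)]
    calc _ ≤ K * b ^ 2 + |κ| * (5 * b ^ 2) := by
          gcongr
          exact hw1.trans (by gcongr)
      _ = _ := by rw [hB]; ring
  have hw3 : |w| ≤ 1 / 2 := by
    calc |w| ≤ B * b ^ 2 := hw2
      _ ≤ B * b := by gcongr
      _ ≤ _ := by linarith
  have hT := ht w hw3
  have e2 : ∑ i ∈ Finset.range 2, binCoeff i β * w ^ i = 1 + β * w := by
    simp [Finset.sum_range_succ, binCoeff]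
  rw [e2] at hT
  have hw4 := abs_le.1 hw3
  have hmain : |(1 + w) ^ β - 1 - (α - 3) / 6 * (a ^ 2 + b ^ 2)| ≤ C * b ^ 4 := by
    have e : (1 + w) ^ β - 1 - (α - 3) / 6 * (a ^ 2 + b ^ 2) =
        ((1 + w) ^ β - (1 + β * w)) + β * (w - κ * (a ^ 2 + b ^ 2)) := by
      rw [hκ, hβ]; field_simp; ring
    rw [e]
    refine (abs_add_le _ _).trans ?_
    rw [abs_mul]
    calc _ ≤ C₂ * (B * b ^ 2) ^ 2 + |β| * (K * b ^ 4) := by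
          gcongr
          exact hT.trans (by gcongr)
      _ = _ := by rw [hCdef]; ring
  have hσ : |(1 + w) ^ β - 1| ≤ 1 / 2 := by
    have e : (1 + w) ^ β - 1 = ((1 + w) ^ β - 1 - (α - 3) / 6 * (a ^ 2 + b ^ 2)) +
      (α - 3) / 6 * (a ^ 2 + b ^ 2) := by ring
    rw [e]
    refine (abs_add_le _ _).trans ?_
    rw [abs_mul, abs_of_nonneg (by positivity : 0 ≤ a ^ 2 + b ^ 2)]
    calc _ ≤ C * b ^ 2 + |(α - 3) / 6| * (5 * b ^ 2) := by
          gcongr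
          exact hmain.trans (by gcongr)
      _ = G * b ^ 2 := by rw [hG]; ring
      _ ≤ G * b := by gcongr
      _ ≤ _ := by linarith
  have hσ' := abs_le.1 hσ
  refine ⟨(1 + w) ^ β, by linarith, by linarith, ?_, hmain⟩
  rw [hβ, Real.rpow_inv_rpow (by linarith) hα2, hDw]

/-- `t(m, h₁, h₂) = α(α-1) h₁h₂ τ^{α-2}` with `τ` given explicitly up to `O(h₂⁴/m³)`. -/
lemma tCZ_eq (α : ℝ) (h0 : α ≠ 0) (h1 : α ≠ 1) (h2 : α ≠ 2) :
    ∃ c C : ℝ, 0 < c ∧ 0 < C ∧ ∀ (m h₁ h₂ : ℕ) (x : ℝ), x = m + ((h₁ : ℝ) + h₂) / 2 →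
      1 ≤ m → 1 ≤ h₁ → h₁ ≤ 2 * h₂ → (h₂ : ℝ) ≤ c * m →
      ∃ τ : ℝ, x / 2 ≤ τ ∧ τ ≤ 2 * x ∧
        tCZ α m h₁ h₂ = α * (α - 1) * ((h₁ : ℝ) * h₂) * τ ^ (α - 2) ∧
        |τ - x - (α - 3) / 24 * ((h₁ : ℝ) ^ 2 + (h₂ : ℝ) ^ 2) / x| ≤ C * (h₂ : ℝ) ^ 4 / x ^ 3 := by
  obtain ⟨c, C, hc, hC, h⟩ := diff_scaled α h0 h1 h2
  refine ⟨min c (1 / 3), C, by positivity, hC, ?_⟩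
  intro m h₁ h₂ x hx hm hh1 hh12 hh2
  have hmR : (1 : ℝ) ≤ m := by exact_mod_cast hm
  have hh1R : (1 : ℝ) ≤ h₁ := by exact_mod_cast hh1
  have hh12R : (h₁ : ℝ) ≤ 2 * h₂ := by exact_mod_cast hh12
  have hxm : (m : ℝ) ≤ x := by linarith
  have hx0 : 0 < x := by linarith
  have hb1 : (h₂ : ℝ) ≤ c * x := by
    calc (h₂ : ℝ) ≤ min c (1 / 3) * m := hh2
      _ ≤ c * x := by gcongr; exact min_le_left _ _
  set a : ℝ := h₁ / (2 * x) with ha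
  set b : ℝ := h₂ / (2 * x) with hb
  have ha0 : 0 < a := by positivity
  have hab : a ≤ 2 * b := by
    rw [ha, hb, ← mul_div_assoc]; gcongr
  have hbc : b ≤ c := by
    rw [hb, div_le_iff₀ (by positivity)]
    nlinarith [mul_pos hc hx0]
  obtain ⟨σ, hσ1, hσ2, hσ3, hσ4⟩ := h a b ha0 hab hbc
  refine ⟨x * σ, by nlinarith, by nlinarith, ?_, ?_⟩
  · have e1 : ((m + h₁ + h₂ : ℕ) : ℝ) = x * (1 + (a + b)) := by
      rw [ha, hb, hx]; rw [hx] at hx0; push_cast; field_simp; ring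
    have e2 : (m : ℝ) = x * (1 - (a + b)) := by
      rw [ha, hb, hx]; rw [hx] at hx0; field_simp; ring
    have e3 : ((m + h₂ : ℕ) : ℝ) = x * (1 + (b - a)) := by
      rw [ha, hb, hx]; rw [hx] at hx0; push_cast; field_simp; ring
    have e4 : ((m + h₁ : ℕ) : ℝ) = x * (1 - (b - a)) := by
      rw [ha, hb, hx]; rw [hx] at hx0; push_cast; field_simp; ring
    have p : ∀ u v : ℝ, 0 ≤ u → u = x * v → u ^ α = x ^ α * v ^ α := by
      intro u v hu huv
      have hv : 0 ≤ v := by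
        by_contra hv
        push Not at hv
        nlinarith
      rw [huv, Real.mul_rpow hx0.le hv]
    unfold tCZ
    rw [p _ _ (by positivity) e1, p _ _ (by positivity) e2, p _ _ (by positivity) e3,
      p _ _ (by positivity) e4]
    have e5 : x ^ α = x ^ (α - 2) * x ^ 2 := by
      rw [← Real.rpow_natCast x 2, ← Real.rpow_add hx0]; congr 1; push_cast; ring
    calc _ = x ^ α * ((1 + (a + b)) ^ α + (1 - (a + b)) ^ α - (1 + (b - a)) ^ α
            - (1 - (b - a)) ^ α) := by ring
      _ = _ := by
        rw [hσ3, e5, Real.mul_rpow hx0.le (by linarith), ha, hb]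
        field_simp
        ring
  · have e : x * σ - x - (α - 3) / 24 * ((h₁ : ℝ) ^ 2 + (h₂ : ℝ) ^ 2) / x =
        x * (σ - 1 - (α - 3) / 6 * (a ^ 2 + b ^ 2)) := by
      rw [ha, hb]; field_simp; ring
    rw [e, abs_mul, abs_of_pos hx0]
    calc x * |σ - 1 - (α - 3) / 6 * (a ^ 2 + b ^ 2)| ≤ x * (C * b ^ 4) := by gcongr
      _ = C * (h₂ : ℝ) ^ 4 / x ^ 3 / 16 := by rw [hb]; field_simp; ring
      _ ≤ _ := by
        have : 0 ≤ C * (h₂ : ℝ) ^ 4 / x ^ 3 := by positivity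
        linarith

/-! ### Reduction to points near a curve -/

/-- Inverting `τ = x + κA/x + O(e)`, `τ' = y + κB/y + O(e)`: if `τ` is close to `θτ'` then `x` is
close to `θy + μ/y`, the second order coefficient `μ = κ(θB - A/θ)` not depending on `x, y`. -/
lemma red_algebra (κ Θ θ A B x y τ τ' e d h M : ℝ) (hM : 0 < M) (hx : M ≤ x) (hy : M ≤ y)
    (hΘ : 1 ≤ Θ) (hθ1 : 1 ≤ θ * Θ) (hθ2 : θ ≤ Θ) (hA0 : 0 ≤ A) (hA : A ≤ 8 * h ^ 2)
    (hB0 : 0 ≤ B) (hB : B ≤ 8 * h ^ 2) (hh0 : 0 ≤ h) (hhM : h ≤ M)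
    (h1 : |τ - x - κ * A / x| ≤ e) (h2 : |τ' - y - κ * B / y| ≤ e) (h3 : |τ - θ * τ'| ≤ d) :
    |x - θ * y - κ * (θ * B - A / θ) / y| ≤
      (1 + 8 * |κ| * Θ) * (d + (1 + Θ) * e) + 64 * κ ^ 2 * Θ * (1 + Θ) * h ^ 4 / M ^ 3 := by
  have hΘ0 : 0 < Θ := by linarith
  have hθ0 : 0 < θ := by
    by_contra hn
    push Not at hn
    nlinarith
  have hx0 : 0 < x := by linarith
  have hy0 : 0 < y := by linarith
  have he : 0 ≤ e := (abs_nonneg _).trans h1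
  have hd : 0 ≤ d := (abs_nonneg _).trans h3
  set F := d + (1 + Θ) * e with hF
  have hF0 : 0 ≤ F := by positivity
  have hF1 : |(τ - θ * τ') - (τ - x - κ * A / x) + θ * (τ' - y - κ * B / y)| ≤ F := by
    refine (abs_add_le _ _).trans ?_
    rw [abs_mul, abs_of_pos hθ0]
    have a1 := abs_sub (τ - θ * τ') (τ - x - κ * A / x)
    have a2 : θ * |τ' - y - κ * B / y| ≤ Θ * e := by gcongr
    rw [hF]; linarith
  have hAx : |κ * A / x| ≤ |κ| * (8 * h ^ 2) / M := by
    rw [abs_div, abs_mul, abs_of_nonneg hA0, abs_of_pos hx0]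
    gcongr
  have hBy : |θ * (κ * B / y)| ≤ Θ * (|κ| * (8 * h ^ 2) / M) := by
    rw [abs_mul, abs_div, abs_mul, abs_of_nonneg hB0, abs_of_pos hy0, abs_of_pos hθ0]
    gcongr
  have hxy : |x - θ * y| ≤ F + (1 + Θ) * (|κ| * (8 * h ^ 2) / M) := by
    have e1 : x - θ * y = ((τ - θ * τ') - (τ - x - κ * A / x) + θ * (τ' - y - κ * B / y))
        - κ * A / x + θ * (κ * B / y) := by ring
    rw [e1]
    refine (abs_add_le _ _).trans ?_
    have := abs_sub ((τ - θ * τ') - (τ - x - κ * A / x) + θ * (τ' - y - κ * B / y)) (κ * A / x)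
    linarith
  have e2 : x - θ * y - κ * (θ * B - A / θ) / y =
      ((τ - θ * τ') - (τ - x - κ * A / x) + θ * (τ' - y - κ * B / y))
        + κ * A / (x * (θ * y)) * (x - θ * y) := by
    field_simp; ring
  have h4 : |κ * A / (x * (θ * y))| ≤ |κ| * (8 * h ^ 2) * Θ / M ^ 2 := by
    rw [abs_div, abs_mul, abs_of_nonneg hA0, abs_of_pos (by positivity : 0 < x * (θ * y)),
      div_le_div_iff₀ (by positivity) (by positivity)]
    have h5 : M ^ 2 ≤ (x * y) * (θ * Θ) := by
      have : M ^ 2 ≤ x * y := by nlinarith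
      nlinarith [mul_pos hx0 hy0]
    calc |κ| * A * M ^ 2 ≤ |κ| * (8 * h ^ 2) * ((x * y) * (θ * Θ)) := by gcongr
      _ = _ := by ring
  have h6 : h ^ 2 / M ^ 2 ≤ 1 := by
    rw [div_le_one (by positivity)]; gcongr
  rw [e2]
  refine (abs_add_le _ _).trans ?_
  rw [abs_mul]
  calc _ ≤ F + |κ| * (8 * h ^ 2) * Θ / M ^ 2 * (F + (1 + Θ) * (|κ| * (8 * h ^ 2) / M)) := by gcongr
    _ = F + (8 * |κ| * Θ * F) * (h ^ 2 / M ^ 2) + 64 * |κ| ^ 2 * Θ * (1 + Θ) * h ^ 4 / M ^ 3 := by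
      field_simp; ring
    _ ≤ F + (8 * |κ| * Θ * F) * 1 + 64 * |κ| ^ 2 * Θ * (1 + Θ) * h ^ 4 / M ^ 3 := by gcongr
    _ = _ := by rw [sq_abs]; ring

/-- If `α(α-1) n τ ^ (α-2)` and `α(α-1) k τ' ^ (α-2)` are within `ΔT`, and `n θ ^ (α-2) = k`, then
`τ` is within `O(ΔM)` of `θτ'`, by the Lipschitz property of the inverse power. -/
lemma tau_close (α L Θ θ τ τ' M n k H Δ : ℝ) (ha : 0 < |α * (α - 1)|)
    (hlip : ∀ x ∈ Set.Icc (1 / (6 * Θ)) (6 * Θ), ∀ y ∈ Set.Icc (1 / (6 * Θ)) (6 * Θ),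
      |x - y| ≤ L * |x ^ (α - 2) - y ^ (α - 2)|)
    (hM : 0 < M) (hΘ : 1 ≤ Θ) (hθ1 : 1 ≤ θ * Θ) (hθ2 : θ ≤ Θ)
    (t1 : M / 2 ≤ τ) (t2 : τ ≤ 6 * M) (t1' : M / 2 ≤ τ') (t2' : τ' ≤ 6 * M)
    (hH : 0 < H) (hn : H ≤ n) (hk : n * θ ^ (α - 2) = k)
    (ht : |α * (α - 1) * n * τ ^ (α - 2) - α * (α - 1) * k * τ' ^ (α - 2)| ≤
      Δ * (M ^ (α - 2) * H)) :
    |τ - θ * τ'| ≤ (L / |α * (α - 1)|) * (Δ * M) := by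
  have hΘ0 : 0 < Θ := by linarith
  have hθ0 : 0 < θ := by
    by_contra hn
    push Not at hn
    nlinarith
  have hτ0 : 0 < τ := by linarith
  have hτ0' : 0 < τ' := by linarith
  have p1 : τ / M ∈ Set.Icc (1 / (6 * Θ)) (6 * Θ) := by
    constructor
    · rw [div_le_div_iff₀ (by positivity) hM]
      have : M / 2 * 1 ≤ τ * Θ := by gcongr
      linarith
    · rw [div_le_iff₀ hM]
      have : 6 * M * 1 ≤ 6 * M * Θ := by gcongr
      linarith
  have p2 : θ * τ' / M ∈ Set.Icc (1 / (6 * Θ)) (6 * Θ) := by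
    constructor
    · rw [div_le_div_iff₀ (by positivity) hM]
      have : M / 2 * 1 ≤ τ' * (θ * Θ) := by gcongr
      linarith
    · rw [div_le_iff₀ hM]
      have : θ * τ' ≤ Θ * (6 * M) := by gcongr
      linarith
  have p3 := hlip _ p1 _ p2
  have hMp : 0 < M ^ (α - 2) := Real.rpow_pos_of_pos hM _
  have e4 : α * (α - 1) * n * τ ^ (α - 2) - α * (α - 1) * k * τ' ^ (α - 2) =
      (α * (α - 1)) * (n * M ^ (α - 2)) * ((τ / M) ^ (α - 2) - (θ * τ' / M) ^ (α - 2)) := by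
    rw [← hk, Real.div_rpow hτ0.le hM.le, Real.div_rpow (by positivity) hM.le,
      Real.mul_rpow hθ0.le hτ0'.le]
    field_simp
  have hn0 : 0 < n := by linarith
  rw [e4, abs_mul, abs_mul, abs_of_pos (by positivity : 0 < n * M ^ (α - 2))] at ht
  have hL : 0 ≤ L := by
    by_contra hL
    have q := hlip 1 ⟨by rw [div_le_one (by positivity)]; linarith, by linarith⟩ (6 * Θ)
      ⟨by rw [div_le_iff₀ (by positivity)]; nlinarith, le_rfl⟩
    have q1 : 0 < |1 - 6 * Θ| := abs_pos.2 (by linarith)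
    have q2 := abs_nonneg ((1 : ℝ) ^ (α - 2) - (6 * Θ) ^ (α - 2))
    nlinarith
  generalize (τ / M) ^ (α - 2) - (θ * τ' / M) ^ (α - 2) = D at *
  have q1 : (|α * (α - 1)| * |D|) * (H * M ^ (α - 2)) ≤ Δ * (H * M ^ (α - 2)) := by
    calc _ ≤ (|α * (α - 1)| * |D|) * (n * M ^ (α - 2)) := by gcongr
      _ = |α * (α - 1)| * (n * M ^ (α - 2)) * |D| := by ring
      _ ≤ _ := ht
      _ = _ := by ring
  have q2 : |α * (α - 1)| * |D| ≤ Δ := le_of_mul_le_mul_right q1 (by positivity)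
  have q3 : |D| ≤ Δ / |α * (α - 1)| := by rw [le_div_iff₀ ha]; linarith
  have q4 : τ - θ * τ' = M * (τ / M - θ * τ' / M) := by field_simp
  rw [q4, abs_mul, abs_of_pos hM]
  calc M * |τ / M - θ * τ' / M| ≤ M * (L * (Δ / |α * (α - 1)|)) := by
        gcongr; exact p3.trans (by gcongr)
    _ = _ := by ring

set_option maxHeartbeats 1600000 in
/-- The condition `|t - t'| ≤ ΔT` places the integer point `(2m' + k₁ + k₂, 2m + h₁ + h₂)` near the
curve `X = θY + μ/Y`, where `θ` and `μ` depend only on the increments. -/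
lemma reduction (α : ℝ) (h0 : α ≠ 0) (h1 : α ≠ 1) (h2 : α ≠ 2) :
    ∃ c C K : ℝ, 0 < c ∧ c ≤ 1 / 2 ∧ 0 < C ∧ 0 < K ∧
      ∀ (M H₁ H₂ : ℕ) (Δ : ℝ), 1 ≤ M → 1 ≤ H₁ → H₁ ≤ H₂ → (H₂ : ℝ) ≤ c * M → 0 < Δ →
      ∀ h₁ h₂ k₁ k₂ : ℕ, H₁ ≤ h₁ → h₁ < 2 * H₁ → H₂ ≤ h₂ → h₂ < 2 * H₂ →
        H₁ ≤ k₁ → k₁ < 2 * H₁ → H₂ ≤ k₂ → k₂ < 2 * H₂ →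
      ∃ μ : ℝ, |μ| ≤ K * (H₂ : ℝ) ^ 2 ∧ ∀ m m' : ℕ, M ≤ m → m < 2 * M → M ≤ m' → m' < 2 * M →
        |tCZ α m h₁ h₂ - tCZ α m' k₁ k₂| ≤ Δ * ((M : ℝ) ^ (α - 2) * H₁ * H₂) →
        |(2 * (m : ℝ) + h₁ + h₂)
            - (((k₁ * k₂ : ℕ) : ℝ) / ((h₁ * h₂ : ℕ) : ℝ)) ^ (α - 2)⁻¹ * (2 * (m' : ℝ) + k₁ + k₂)
            - μ / (2 * (m' : ℝ) + k₁ + k₂)| ≤ C * (Δ * M + (H₂ : ℝ) ^ 4 / (M : ℝ) ^ 3) := by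
  obtain ⟨c, Ct, hc, hCt, htau⟩ := tCZ_eq α h0 h1 h2
  have hα2 : α - 2 ≠ 0 := sub_ne_zero.2 h2
  set β := (α - 2)⁻¹ with hβ
  set Θ : ℝ := 4 ^ |β| with hΘ
  have hΘ1 : 1 ≤ Θ := Real.one_le_rpow (by norm_num) (abs_nonneg _)
  obtain ⟨L, hL, hlip⟩ := rpow_inv_lipschitz (α - 2) (6 * Θ) hα2 (by linarith)
  set κ : ℝ := (α - 3) / 24 with hκ
  have ha : 0 < |α * (α - 1)| := abs_pos.2 (mul_ne_zero h0 (sub_ne_zero.2 h1))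
  set G : ℝ := 1 + 8 * |κ| * Θ with hG
  have hG0 : 0 < G := by positivity
  set C : ℝ := 2 * (G * (L / |α * (α - 1)|) + G * ((1 + Θ) * (16 * Ct))
    + 64 * κ ^ 2 * Θ * (1 + Θ)) with hC
  refine ⟨min (c / 2) (1 / 2), C, 64 * |κ| * Θ + 1, by positivity, min_le_right _ _,
    by positivity, by positivity, ?_⟩
  intro M H₁ H₂ Δ hM hH1 hH12 hH2 hΔ h₁ h₂ k₁ k₂ hh1 hh1' hh2 hh2' hk1 hk1' hk2 hk2'
  have hMR : (1 : ℝ) ≤ M := by exact_mod_cast hM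
  have hM0 : (0 : ℝ) < M := by linarith
  have hH2c : (H₂ : ℝ) ≤ c / 2 * M := hH2.trans (by gcongr; exact min_le_left _ _)
  have hH2h : (H₂ : ℝ) ≤ 1 / 2 * M := hH2.trans (by gcongr; exact min_le_right _ _)
  have hH1R : (1 : ℝ) ≤ H₁ := by exact_mod_cast hH1
  have hH12R : (H₁ : ℝ) ≤ H₂ := by exact_mod_cast hH12
  have c1 : (H₁ : ℝ) ≤ h₁ := by exact_mod_cast hh1
  have c2 : (h₁ : ℝ) ≤ 2 * H₁ := by exact_mod_cast hh1'.le
  have c3 : (H₂ : ℝ) ≤ h₂ := by exact_mod_cast hh2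
  have c4 : (h₂ : ℝ) ≤ 2 * H₂ := by exact_mod_cast hh2'.le
  have d1 : (H₁ : ℝ) ≤ k₁ := by exact_mod_cast hk1
  have d2 : (k₁ : ℝ) ≤ 2 * H₁ := by exact_mod_cast hk1'.le
  have d3 : (H₂ : ℝ) ≤ k₂ := by exact_mod_cast hk2
  have d4 : (k₂ : ℝ) ≤ 2 * H₂ := by exact_mod_cast hk2'.le
  have hn0 : (0 : ℝ) < (h₁ : ℝ) * h₂ := mul_pos (by linarith) (by linarith)
  have hk0 : (0 : ℝ) < (k₁ : ℝ) * k₂ := mul_pos (by linarith) (by linarith)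
  have hH0 : (0 : ℝ) < (H₁ : ℝ) * H₂ := mul_pos (by linarith) (by linarith)
  have hnl : (H₁ : ℝ) * H₂ ≤ (h₁ : ℝ) * h₂ := by gcongr
  have hkl : (H₁ : ℝ) * H₂ ≤ (k₁ : ℝ) * k₂ := by gcongr
  have hnu : (h₁ : ℝ) * h₂ ≤ 4 * ((H₁ : ℝ) * H₂) := by
    calc (h₁ : ℝ) * h₂ ≤ (2 * H₁) * (2 * H₂) := by gcongr
      _ = _ := by ring
  have hku : (k₁ : ℝ) * k₂ ≤ 4 * ((H₁ : ℝ) * H₂) := by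
    calc (k₁ : ℝ) * k₂ ≤ (2 * H₁) * (2 * H₂) := by gcongr
      _ = _ := by ring
  push_cast
  set r : ℝ := (k₁ : ℝ) * k₂ / ((h₁ : ℝ) * h₂) with hr
  have hr0 : 0 < r := by positivity
  have hr1 : r ∈ Set.Icc (1 / (4 : ℝ)) 4 := by
    constructor
    · rw [hr, le_div_iff₀ hn0]; linarith
    · rw [hr, div_le_iff₀ hn0]; linarith
  set θ : ℝ := r ^ β with hθ
  have hθ0 : 0 < θ := Real.rpow_pos_of_pos hr0 _
  obtain ⟨hθ1, hθ2⟩ := rpow_bdd β 4 (by norm_num) r hr1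
  rw [Real.rpow_neg (by norm_num)] at hθ1
  have hθΘ : 1 ≤ θ * Θ := by
    have hΘ0 : 0 < Θ := by linarith
    calc 1 = Θ⁻¹ * Θ := by field_simp
      _ ≤ θ * Θ := by gcongr
  have hθr : θ ^ (α - 2) = r := by
    rw [hθ, hβ, Real.rpow_inv_rpow hr0.le hα2]
  set A : ℝ := (h₁ : ℝ) ^ 2 + (h₂ : ℝ) ^ 2 with hA
  set B : ℝ := (k₁ : ℝ) ^ 2 + (k₂ : ℝ) ^ 2 with hB
  have hA8 : A ≤ 8 * (H₂ : ℝ) ^ 2 := by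
    calc A ≤ (2 * (H₂ : ℝ)) ^ 2 + (2 * (H₂ : ℝ)) ^ 2 := by
          rw [hA]; gcongr; linarith
      _ = _ := by ring
  have hB8 : B ≤ 8 * (H₂ : ℝ) ^ 2 := by
    calc B ≤ (2 * (H₂ : ℝ)) ^ 2 + (2 * (H₂ : ℝ)) ^ 2 := by
          rw [hB]; gcongr; linarith
      _ = _ := by ring
  have hA0 : 0 ≤ A := by positivity
  have hB0 : 0 ≤ B := by positivity
  refine ⟨4 * (κ * (θ * B - A / θ)), ?_, ?_⟩
  · rw [abs_mul, abs_mul, abs_of_pos (by norm_num : (0 : ℝ) < 4)]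
    have g1 : θ * B ≤ Θ * (8 * (H₂ : ℝ) ^ 2) := by gcongr
    have g2 : A / θ ≤ Θ * (8 * (H₂ : ℝ) ^ 2) := by
      rw [div_le_iff₀ hθ0]
      calc A ≤ 8 * (H₂ : ℝ) ^ 2 * 1 := by linarith
        _ ≤ 8 * (H₂ : ℝ) ^ 2 * (θ * Θ) := by gcongr
        _ = _ := by ring
    have g3 : 0 ≤ θ * B := by positivity
    have g4 : 0 ≤ A / θ := by positivity
    have : |θ * B - A / θ| ≤ Θ * (8 * (H₂ : ℝ) ^ 2) := by
      rw [abs_le]; constructor <;> linarith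
    calc 4 * (|κ| * |θ * B - A / θ|) ≤ 4 * (|κ| * (Θ * (8 * (H₂ : ℝ) ^ 2))) := by gcongr
      _ = 32 * |κ| * Θ * (H₂ : ℝ) ^ 2 := by ring
      _ ≤ _ := by
        have : 0 ≤ |κ| * Θ * (H₂ : ℝ) ^ 2 := by positivity
        have := sq_nonneg (H₂ : ℝ)
        linarith
  · intro m m' hm hm2 hm' hm2' ht
    have m1 : (M : ℝ) ≤ m := by exact_mod_cast hm
    have m2 : (m : ℝ) ≤ 2 * M := by exact_mod_cast hm2.le
    have m3 : (M : ℝ) ≤ m' := by exact_mod_cast hm'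
    have m4 : (m' : ℝ) ≤ 2 * M := by exact_mod_cast hm2'.le
    have mc : c * (M : ℝ) ≤ c * m := by gcongr
    have mc' : c * (M : ℝ) ≤ c * m' := by gcongr
    obtain ⟨τ, t1, t2, t3, t4⟩ := htau m h₁ h₂ _ rfl (by omega) (by omega) (by omega)
      (by linarith)
    obtain ⟨τ', t1', t2', t3', t4'⟩ := htau m' k₁ k₂ _ rfl (by omega) (by omega) (by omega)
      (by linarith)
    set x : ℝ := m + ((h₁ : ℝ) + h₂) / 2 with hx
    set y : ℝ := m' + ((k₁ : ℝ) + k₂) / 2 with hy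
    have hxM : (M : ℝ) ≤ x := by linarith
    have hyM : (M : ℝ) ≤ y := by linarith
    have hx3 : x ≤ 3 * M := by linarith
    have hy3 : y ≤ 3 * M := by linarith
    have hτ0 : 0 < τ := by linarith
    have hτ0' : 0 < τ' := by linarith
    have er : ∀ (z w h : ℝ), (M : ℝ) ≤ w → 0 ≤ h → h ≤ 2 * H₂ → z ≤ Ct * h ^ 4 / w ^ 3 →
        z ≤ 16 * Ct * ((H₂ : ℝ) ^ 4 / (M : ℝ) ^ 3) := by
      intro z w h hw hh hh' hz
      calc z ≤ Ct * h ^ 4 / w ^ 3 := hz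
        _ ≤ Ct * (2 * H₂) ^ 4 / (M : ℝ) ^ 3 := by gcongr
        _ = _ := by ring
    have e1 := er _ _ _ hxM (by positivity) c4 t4
    have e2 := er _ _ _ hyM (by positivity) d4 t4'
    have e3 : |τ - θ * τ'| ≤ (L / |α * (α - 1)|) * (Δ * M) := by
      refine tau_close α L Θ θ τ τ' M ((h₁ : ℝ) * h₂) ((k₁ : ℝ) * k₂) ((H₁ : ℝ) * H₂) Δ ha hlip hM0
        hΘ1 hθΘ hθ2 (by linarith) (by linarith) (by linarith) (by linarith) hH0 hnl
        (by rw [hθr, hr, mul_div_assoc']; exact mul_div_cancel_left₀ _ hn0.ne') ?_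
      rw [← t3, ← t3']
      refine ht.trans (le_of_eq ?_)
      ring
    have main := red_algebra κ Θ θ A B x y τ τ' _ _ H₂ M hM0 hxM hyM hΘ1 hθΘ hθ2 hA0 hA8 hB0 hB8
      (by positivity) (by linarith) e1 e2 e3
    have e5 : (2 * (m : ℝ) + h₁ + h₂) - θ * (2 * (m' : ℝ) + k₁ + k₂)
        - 4 * (κ * (θ * B - A / θ)) / (2 * (m' : ℝ) + k₁ + k₂) =
        2 * (x - θ * y - κ * (θ * B - A / θ) / y) := by
      have y2 : 2 * (m' : ℝ) + k₁ + k₂ = 2 * y := by rw [hy]; ring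
      have hy0 : y ≠ 0 := by linarith
      rw [y2, show 2 * (m : ℝ) + h₁ + h₂ = 2 * x by rw [hx]; ring]
      field_simp
      ring
    rw [e5, abs_mul, abs_of_pos (by norm_num : (0 : ℝ) < 2)]
    have hu : 0 ≤ Δ * M := by positivity
    have hv : 0 ≤ (H₂ : ℝ) ^ 4 / (M : ℝ) ^ 3 := by positivity
    calc _ ≤ 2 * _ := mul_le_mul_of_nonneg_left main (by norm_num)
      _ = 2 * (G * (L / |α * (α - 1)|)) * (Δ * M) + 2 * (G * ((1 + Θ) * (16 * Ct))
          + 64 * κ ^ 2 * Θ * (1 + Θ)) * ((H₂ : ℝ) ^ 4 / (M : ℝ) ^ 3) := by rw [hG]; ring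
      _ ≤ C * (Δ * M) + C * ((H₂ : ℝ) ^ 4 / (M : ℝ) ^ 3) := by
        have s1 : 0 ≤ G * (L / |α * (α - 1)|) := by positivity
        have s2 : 0 ≤ G * ((1 + Θ) * (16 * Ct)) + 64 * κ ^ 2 * Θ * (1 + Θ) := by positivity
        gcongr <;> rw [hC] <;> linarith
      _ = _ := by ring

/-! ### Counting rational approximations to the slopes -/

/-- The quadruples `((h₁, k₁), (h₂, k₂))` with `h₁, k₁ ∈ [H₁, 2H₁)` and `h₂, k₂ ∈ [H₂, 2H₂)`. -/
def quads (H₁ H₂ : ℕ) : Finset ((ℕ × ℕ) × (ℕ × ℕ)) :=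
  (Finset.Ico H₁ (2 * H₁) ×ˢ Finset.Ico H₁ (2 * H₁))
    ×ˢ (Finset.Ico H₂ (2 * H₂) ×ˢ Finset.Ico H₂ (2 * H₂))

lemma mem_quads {H₁ H₂ : ℕ} {q : (ℕ × ℕ) × (ℕ × ℕ)} : q ∈ quads H₁ H₂ ↔
    ((H₁ ≤ q.1.1 ∧ q.1.1 < 2 * H₁) ∧ (H₁ ≤ q.1.2 ∧ q.1.2 < 2 * H₁)) ∧
      ((H₂ ≤ q.2.1 ∧ q.2.1 < 2 * H₂) ∧ (H₂ ≤ q.2.2 ∧ q.2.2 < 2 * H₂)) := by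
  simp [quads]

lemma card_quads (H₁ H₂ : ℕ) : (quads H₁ H₂).card = (H₁ * H₂) ^ 2 := by
  simp only [quads, Finset.card_product, Nat.card_Ico]
  rw [show 2 * H₁ - H₁ = H₁ by omega, show 2 * H₂ - H₂ = H₂ by omega]
  ring

/-- The slope `(k₁k₂ / h₁h₂)^β` attached to a quadruple. -/
noncomputable def quadSlope (β : ℝ) (q : (ℕ × ℕ) × (ℕ × ℕ)) : ℝ :=
  (((q.1.2 * q.2.2 : ℕ) : ℝ) / ((q.1.1 * q.2.1 : ℕ) : ℝ)) ^ β

lemma prod_range {H₁ H₂ a b : ℕ} (h1 : H₁ ≤ a) (h2 : a < 2 * H₁) (h3 : H₂ ≤ b)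
    (h4 : b < 2 * H₂) : H₁ * H₂ ≤ a * b ∧ a * b < 4 * (H₁ * H₂) := by
  refine ⟨Nat.mul_le_mul h1 h3, ?_⟩
  calc a * b < (2 * H₁) * (2 * H₂) := Nat.mul_lt_mul'' h2 h4
    _ = _ := by ring

/-- Replacing a quadruple by the pair of products `(h₁h₂, k₁k₂)` loses at most the square of the
divisor bound `D`. -/
lemma quad_fibre (H₁ H₂ D : ℕ) (hH1 : 1 ≤ H₁)
    (hD : ∀ n : ℕ, 1 ≤ n → n < 4 * (H₁ * H₂) → n.divisors.card ≤ D) (hH2 : 1 ≤ H₂)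
    (R : (ℕ × ℕ) × (ℕ × ℕ) → Finset ℚ) :
    ((quads H₁ H₂).sigma R).card ≤ D ^ 2 * (((quads H₁ H₂).sigma R).image
      (fun x : (_ : (ℕ × ℕ) × (ℕ × ℕ)) × ℚ =>
        ((x.1.1.1 * x.1.2.1, x.1.1.2 * x.1.2.2), x.2))).card := by
  apply Finset.card_le_mul_card_image
  rintro ⟨⟨n, n'⟩, r⟩ hmem
  obtain ⟨x, hx, hxe⟩ := Finset.mem_image.1 hmem
  rw [Finset.mem_sigma] at hx
  obtain ⟨⟨⟨a1, a2⟩, b1, b2⟩, ⟨c1, c2⟩, d1, d2⟩ := mem_quads.1 hx.1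
  obtain ⟨p1, p2⟩ := prod_range a1 a2 c1 c2
  obtain ⟨p3, p4⟩ := prod_range b1 b2 d1 d2
  simp only [Prod.mk.injEq] at hxe
  obtain ⟨⟨e1, e2⟩, e3⟩ := hxe
  rw [e1] at p1 p2
  rw [e2] at p3 p4
  have hN : 1 ≤ H₁ * H₂ := Nat.mul_pos hH1 hH2
  calc _ ≤ (n.divisors ×ˢ n'.divisors).card := by
        apply Finset.card_le_card_of_injOn (fun x => (x.1.1.1, x.1.1.2))
        · intro y hy
          simp only [Finset.coe_filter, Set.mem_ofPred_eq, Prod.mk.injEq] at hy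
          obtain ⟨-, ⟨f1, f2⟩, -⟩ := hy
          simp only [Finset.coe_product, Set.mem_prod, Finset.mem_coe, Nat.mem_divisors]
          exact ⟨⟨⟨_, f1.symm⟩, by omega⟩, ⟨⟨_, f2.symm⟩, by omega⟩⟩
        · rintro ⟨⟨⟨y1, y2⟩, y3, y4⟩, y5⟩ hy ⟨⟨⟨z1, z2⟩, z3, z4⟩, z5⟩ hz hyz
          simp only [Finset.coe_filter, Set.mem_ofPred_eq, Prod.mk.injEq, Finset.mem_sigma] at hy hz
          simp only [Prod.mk.injEq] at hyz
          obtain ⟨g1, g2⟩ := hyz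
          subst g1 g2
          obtain ⟨⟨hq, -⟩, ⟨f1, f2⟩, f3⟩ := hy
          obtain ⟨-, ⟨f1', f2'⟩, f3'⟩ := hz
          obtain ⟨⟨⟨i1, -⟩, i2, -⟩, -⟩ := mem_quads.1 hq
          have j1 : y3 = z3 := Nat.eq_of_mul_eq_mul_left (by simp at i1; omega) (f1.trans f1'.symm)
          have j2 : y4 = z4 := Nat.eq_of_mul_eq_mul_left (by simp at i2; omega) (f2.trans f2'.symm)
          subst j1 j2 f3 f3'
          rfl
    _ = n.divisors.card * n'.divisors.card := Finset.card_product _ _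
    _ ≤ D * D := Nat.mul_le_mul (hD _ (by omega) p2) (hD _ (by omega) p4)
    _ = D ^ 2 := (sq D).symm

/-- Rational points close to the slopes, with denominators in a dyadic range. The tolerance
`E / (den² j)` is then constant up to a factor `4`, and `spacing_count` applies. -/
lemma dyadic_count (β : ℝ) (hβ : β ≠ 0) : ∃ C : ℝ, 0 < C ∧
    ∀ (H₁ H₂ D i j : ℕ) (E : ℝ) (R : (ℕ × ℕ) × (ℕ × ℕ) → Finset ℚ), 1 ≤ H₁ → 1 ≤ H₂ → 1 ≤ j →
      0 ≤ E → (∀ n : ℕ, 1 ≤ n → n < 4 * (H₁ * H₂) → n.divisors.card ≤ D) →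
      (∀ q ∈ quads H₁ H₂, ∀ r ∈ R q, 2 ^ i ≤ r.den ∧ r.den ≤ 2 * 2 ^ i ∧
        |quadSlope β q - r| ≤ E / ((r.den : ℝ) ^ 2 * j)) →
      ∑ q ∈ quads H₁ H₂, ((R q).card : ℝ) ≤ C * (D : ℝ) ^ 2 * (1 + Real.log (4 * (H₁ * H₂ : ℕ))) *
        (((H₁ * H₂ : ℕ) : ℝ) * 2 ^ i + E * ((H₁ * H₂ : ℕ) : ℝ) ^ 2 / j) := by
  obtain ⟨C, hC, h⟩ := spacing_count β hβ
  refine ⟨C, hC, ?_⟩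
  intro H₁ H₂ D i j E R hH1 hH2 hj hE hD hR
  have hf := quad_fibre H₁ H₂ D hH1 hD hH2 R
  set T := ((quads H₁ H₂).sigma R).image
      (fun x : (_ : (ℕ × ℕ) × (ℕ × ℕ)) × ℚ =>
        ((x.1.1.1 * x.1.2.1, x.1.1.2 * x.1.2.2), x.2)) with hT
  have hjR : (0 : ℝ) < j := by exact_mod_cast hj
  have hc := h (H₁ * H₂) (2 ^ i) (E / (((2 : ℝ) ^ i) ^ 2 * j)) T (Nat.mul_pos hH1 hH2)
    Nat.one_le_two_pow (by positivity) ?_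
  · rw [Finset.card_sigma] at hf
    have hf' : ∑ q ∈ quads H₁ H₂, ((R q).card : ℝ) ≤ (D : ℝ) ^ 2 * T.card := by exact_mod_cast hf
    calc _ ≤ (D : ℝ) ^ 2 * T.card := hf'
      _ ≤ (D : ℝ) ^ 2 * _ := mul_le_mul_of_nonneg_left hc (by positivity)
      _ = _ := by push_cast; field_simp
  · intro t ht
    obtain ⟨x, hx, rfl⟩ := Finset.mem_image.1 ht
    rw [Finset.mem_sigma] at hx
    obtain ⟨⟨⟨a1, a2⟩, b1, b2⟩, ⟨c1, c2⟩, d1, d2⟩ := mem_quads.1 hx.1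
    obtain ⟨r1, r2, r3⟩ := hR _ hx.1 _ hx.2
    refine ⟨prod_range a1 a2 c1 c2, prod_range b1 b2 d1 d2, r2, ?_⟩
    refine r3.trans ?_
    have : (2 : ℝ) ^ i ≤ x.2.den := by exact_mod_cast r1
    gcongr

/-- Rational points close to the slopes with denominators at most `B / j`, by splitting the
denominators dyadically. -/
lemma rational_count_j (β : ℝ) (hβ : β ≠ 0) : ∃ C : ℝ, 0 < C ∧
    ∀ (H₁ H₂ D B j : ℕ) (E : ℝ) (R : (ℕ × ℕ) × (ℕ × ℕ) → Finset ℚ), 1 ≤ H₁ → 1 ≤ H₂ → 1 ≤ j →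
      j ≤ B → 0 ≤ E → (∀ n : ℕ, 1 ≤ n → n < 4 * (H₁ * H₂) → n.divisors.card ≤ D) →
      (∀ q ∈ quads H₁ H₂, ∀ r ∈ R q, r.den * j ≤ B ∧
        |quadSlope β q - r| ≤ E / ((r.den : ℝ) ^ 2 * j)) →
      ∑ q ∈ quads H₁ H₂, ((R q).card : ℝ) ≤ C * (D : ℝ) ^ 2 * (1 + Real.log (4 * (H₁ * H₂ : ℕ))) *
        (((H₁ * H₂ : ℕ) : ℝ) * B + E * ((H₁ * H₂ : ℕ) : ℝ) ^ 2 * (1 + Real.log B)) * (j : ℝ)⁻¹ := by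
  obtain ⟨C, hC, h⟩ := dyadic_count β hβ
  refine ⟨2 * C, by positivity, ?_⟩
  intro H₁ H₂ D B j E R hH1 hH2 hj hjB hE hD hR
  set N := H₁ * H₂ with hN
  have hN1 : 1 ≤ N := Nat.mul_pos hH1 hH2
  have hjR : (0 : ℝ) < j := by exact_mod_cast hj
  have hBj : 1 ≤ B / j := (Nat.one_le_div_iff hj).2 hjB
  have hB1 : (1 : ℝ) ≤ B := by exact_mod_cast hj.trans hjB
  set ℓ := Nat.log 2 (B / j) with hℓ
  have hpow : (2 : ℝ) ^ ℓ * j ≤ B := by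
    have h1 : 2 ^ ℓ ≤ B / j := Nat.pow_log_le_self 2 (by omega)
    have h2 : 2 ^ ℓ * j ≤ B := (Nat.le_div_iff_mul_le hj).1 h1
    exact_mod_cast h2
  have hj1 : (1 : ℝ) ≤ j := by exact_mod_cast hj
  have hℓlog : (ℓ : ℝ) + 1 ≤ 2 * (1 + Real.log B) := by
    have h1 : (2 : ℝ) ^ ℓ ≤ B := by
      calc (2 : ℝ) ^ ℓ = 2 ^ ℓ * 1 := (mul_one _).symm
        _ ≤ 2 ^ ℓ * j := by gcongr
        _ ≤ _ := hpow
    have h2 := Real.log_le_log (by positivity) h1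
    rw [Real.log_pow] at h2
    have h3 := Real.log_two_gt_d9
    have h4 : (ℓ : ℝ) * (1 / 2) ≤ ℓ * Real.log 2 := by gcongr; linarith
    linarith
  have hsplit : ∀ q ∈ quads H₁ H₂, ((R q).card : ℝ) =
      ∑ i ∈ Finset.range (ℓ + 1), (((R q).filter (fun r => Nat.log 2 r.den = i)).card : ℝ) := by
    intro q hq
    have := Finset.card_eq_sum_card_fiberwise (s := R q) (t := Finset.range (ℓ + 1))
      (f := fun r => Nat.log 2 r.den) ?_
    · exact_mod_cast this
    · intro r hr
      simp only [Finset.coe_range, Set.mem_Iio]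
      have := (Nat.le_div_iff_mul_le hj).2 (hR q hq r hr).1
      exact Nat.lt_succ_of_le (Nat.log_mono_right this)
  rw [Finset.sum_congr rfl hsplit, Finset.sum_comm]
  have hlog : 0 ≤ Real.log (4 * (N : ℝ)) := by
    apply Real.log_nonneg
    have : (1 : ℝ) ≤ N := by exact_mod_cast hN1
    linarith
  have hstep : ∀ i ∈ Finset.range (ℓ + 1),
      ∑ q ∈ quads H₁ H₂, (((R q).filter (fun r => Nat.log 2 r.den = i)).card : ℝ) ≤
      C * (D : ℝ) ^ 2 * (1 + Real.log (4 * (N : ℕ))) * ((N : ℝ) * 2 ^ i + E * (N : ℝ) ^ 2 / j) := by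
    intro i _
    refine h H₁ H₂ D i j E _ hH1 hH2 hj hE hD ?_
    intro q hq r hr
    rw [Finset.mem_filter] at hr
    have hd : r.den ≠ 0 := r.den_nz
    refine ⟨?_, ?_, (hR q hq r hr.1).2⟩
    · rw [← hr.2]; exact Nat.pow_log_le_self 2 hd
    · have := Nat.lt_pow_succ_log_self (b := 2) (by norm_num) r.den
      rw [hr.2, pow_succ] at this
      omega
  refine (Finset.sum_le_sum hstep).trans ?_
  rw [← Finset.mul_sum, Finset.sum_add_distrib, ← Finset.mul_sum, Finset.sum_const,
    Finset.card_range, nsmul_eq_mul]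
  have hgeom : ∑ i ∈ Finset.range (ℓ + 1), (2 : ℝ) ^ i ≤ 2 * (B * (j : ℝ)⁻¹) := by
    rw [geom_sum_eq (by norm_num), pow_succ]
    have : (2 : ℝ) ^ ℓ ≤ B * (j : ℝ)⁻¹ := by rwa [← div_eq_mul_inv, le_div_iff₀ hjR]
    linarith
  push_cast
  calc _ ≤ C * (D : ℝ) ^ 2 * (1 + Real.log (4 * (N : ℝ))) * ((N : ℝ) * (2 * (B * (j : ℝ)⁻¹)) +
        (2 * (1 + Real.log B)) * (E * (N : ℝ) ^ 2 / j)) := by gcongr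
    _ = _ := by ring

/-- Summing the previous bound over `j ≤ B`. -/
lemma rational_count (β : ℝ) (hβ : β ≠ 0) : ∃ C : ℝ, 0 < C ∧
    ∀ (H₁ H₂ D B : ℕ) (E : ℝ) (R : (ℕ × ℕ) × (ℕ × ℕ) → ℕ → Finset ℚ), 1 ≤ H₁ → 1 ≤ H₂ → 1 ≤ B →
      0 ≤ E → (∀ n : ℕ, 1 ≤ n → n < 4 * (H₁ * H₂) → n.divisors.card ≤ D) →
      (∀ q ∈ quads H₁ H₂, ∀ j, 1 ≤ j → ∀ r ∈ R q j, r.den * j ≤ B ∧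
        |quadSlope β q - r| ≤ E / ((r.den : ℝ) ^ 2 * j)) →
      ∑ q ∈ quads H₁ H₂, ∑ j ∈ Finset.Icc 1 B, ((R q j).card : ℝ) ≤
        C * (D : ℝ) ^ 2 * (1 + Real.log (4 * (H₁ * H₂ : ℕ))) *
        (((H₁ * H₂ : ℕ) : ℝ) * B + E * ((H₁ * H₂ : ℕ) : ℝ) ^ 2) * (1 + Real.log B) ^ 2 := by
  obtain ⟨C, hC, h⟩ := rational_count_j β hβ
  refine ⟨C, hC, ?_⟩
  intro H₁ H₂ D B E R hH1 hH2 hB hE hD hR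
  rw [Finset.sum_comm]
  have hN1 : 1 ≤ H₁ * H₂ := Nat.mul_pos hH1 hH2
  generalize hN : H₁ * H₂ = N at *
  have hB1 : (1 : ℝ) ≤ B := by exact_mod_cast hB
  have hlogB : 0 ≤ Real.log (B : ℝ) := Real.log_nonneg hB1
  have hlog : 0 ≤ Real.log (4 * (N : ℝ)) := by
    apply Real.log_nonneg
    have : (1 : ℝ) ≤ N := by exact_mod_cast hN1
    linarith
  have hharm : ∑ j ∈ Finset.Icc 1 B, (j : ℝ)⁻¹ ≤ 1 + Real.log B := by
    have := harmonic_le_one_add_log B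
    rw [harmonic_eq_sum_Icc] at this
    push_cast at this
    exact this
  calc _ ≤ ∑ j ∈ Finset.Icc 1 B, C * (D : ℝ) ^ 2 * (1 + Real.log (4 * (N : ℝ))) *
        ((N : ℝ) * B + E * (N : ℝ) ^ 2 * (1 + Real.log B)) * (j : ℝ)⁻¹ := by
        apply Finset.sum_le_sum
        intro j hj
        rw [Finset.mem_Icc] at hj
        have := h H₁ H₂ D B j E (fun q => R q j) hH1 hH2 hj.1 hj.2 hE (by rw [hN]; exact hD)
          (fun q hq r hr => hR q hq j hj.1 r hr)
        rw [hN] at this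
        exact this
    _ ≤ C * (D : ℝ) ^ 2 * (1 + Real.log (4 * (N : ℝ))) *
        ((N : ℝ) * B * (1 + Real.log B) + E * (N : ℝ) ^ 2 * (1 + Real.log B)) * (1 + Real.log B) := by
        rw [← Finset.mul_sum]
        have : (N : ℝ) * B * 1 ≤ (N : ℝ) * B * (1 + Real.log B) := by gcongr; linarith
        rw [mul_one] at this
        gcongr
    _ = _ := by ring

/-! ### Pairs belonging to one quadruple -/

/-- If `δ` is not small, each `m'` admits `O(δ)` values of `m`. -/
lemma quad_count_large (M a b : ℕ) (δ θ μ : ℝ) (P : Finset (ℕ × ℕ)) (hδ : 1 / 4 < δ)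
    (hP : ∀ p ∈ P, (M ≤ p.1 ∧ p.1 < 2 * M) ∧ (M ≤ p.2 ∧ p.2 < 2 * M) ∧
      |(2 * (p.1 : ℝ) + a) - θ * (2 * (p.2 : ℝ) + b) - μ / (2 * (p.2 : ℝ) + b)| ≤ δ) :
    (P.card : ℝ) ≤ 5 * δ * M := by
  have hmap : Set.MapsTo Prod.snd (P : Set (ℕ × ℕ)) (Finset.Ico M (2 * M) : Finset ℕ) := by
    intro p hp
    have := (hP p hp).2.1
    simpa using this
  rw [Finset.card_eq_sum_card_fiberwise hmap]
  push_cast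
  calc _ ≤ ∑ _y ∈ Finset.Ico M (2 * M), 5 * δ := by
        apply Finset.sum_le_sum
        intro y _
        have := card_le_of_spaced (P.filter (fun p => p.2 = y)) (fun p => 2 * (p.1 : ℝ)) 2 (2 * δ)
          (by norm_num) (by linarith) ?_ ?_
        · linarith
        · intro p hp p' hp' hne
          rw [Finset.mem_filter] at hp hp'
          have h1 : (p.1 : ℤ) - p'.1 ≠ 0 := by
            intro h
            exact hne (Prod.ext (by omega) (hp.2.trans hp'.2.symm))
          have h2 : (1 : ℝ) ≤ |(((p.1 : ℤ) - p'.1 : ℤ) : ℝ)| := by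
            exact_mod_cast Int.one_le_abs h1
          push_cast at h2
          rw [← mul_sub, abs_mul, abs_of_pos (by norm_num : (0 : ℝ) < 2)]
          linarith
        · intro p hp p' hp'
          rw [Finset.mem_filter] at hp hp'
          have h1 := abs_le.1 (hP p hp.1).2.2
          have h2 := abs_le.1 (hP p' hp'.1).2.2
          rw [hp.2] at h1
          rw [hp'.2] at h2
          linarith [h1.1, h1.2, h2.1, h2.2]
    _ = _ := by
        rw [Finset.sum_const, Nat.card_Ico, show 2 * M - M = M by omega, nsmul_eq_mul]
        ring

/-- The pairs `(m, m')` attached to one quadruple: apart from `O(H₂^{2/3} + δM)` of them they are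
controlled by rational approximations `r` to the slope `θ`. -/
lemma quad_count (K : ℝ) (hK : 0 < K) : ∃ C : ℝ, 0 < C ∧
    ∀ (M H a b : ℕ) (δ θ μ : ℝ) (P : Finset (ℕ × ℕ)), 1 ≤ M → 1 ≤ H → b ≤ 4 * M → 0 < δ →
      |μ| ≤ K * (H : ℝ) ^ 2 →
      (∀ p ∈ P, (M ≤ p.1 ∧ p.1 < 2 * M) ∧ (M ≤ p.2 ∧ p.2 < 2 * M) ∧
        |(2 * (p.1 : ℝ) + a) - θ * (2 * (p.2 : ℝ) + b) - μ / (2 * (p.2 : ℝ) + b)| ≤ δ) →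
      ∃ R : ℕ → Finset ℚ,
        (∀ j, 1 ≤ j → ∀ r ∈ R j, r.den * j ≤ 12 * M ∧
          |θ - r| ≤ 256 * δ * M / ((r.den : ℝ) ^ 2 * j)) ∧
        (P.card : ℝ) ≤ C * ((H : ℝ) ^ ((2 : ℝ) / 3) + δ * M)
          + ∑ j ∈ Finset.Icc 1 (12 * M), ((R j).card : ℝ) := by
  classical
  set w : ℝ := 1 / (1 + 2 * K) with hw
  have hw0 : 0 < w := by positivity
  have hw1 : w ≤ 1 := by rw [hw, div_le_one (by positivity)]; linarith
  have hwK : w ^ 3 * K < 1 / 2 := by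
    calc w ^ 3 * K ≤ w * K := by
          gcongr
          exact pow_le_of_le_one hw0.le hw1 (by norm_num)
      _ < 1 / 2 := by
          rw [hw, div_mul_eq_mul_div, div_lt_div_iff₀ (by positivity) (by norm_num)]
          linarith
  refine ⟨16 / w + 150, by positivity, ?_⟩
  intro M H a b δ θ μ P hM hH hb hδ hμ hP
  have hM0 : (0 : ℝ) < M := by exact_mod_cast hM
  have hH1 : (1 : ℝ) ≤ H := by exact_mod_cast hH
  set Y : ℝ := (H : ℝ) ^ ((2 : ℝ) / 3) with hY
  have hY1 : 1 ≤ Y := Real.one_le_rpow hH1 (by norm_num)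
  have hY3 : Y ^ 3 = (H : ℝ) ^ 2 := by
    rw [hY, ← Real.rpow_natCast, ← Real.rpow_mul (by positivity), ← Real.rpow_natCast]
    norm_num
  rcases lt_or_ge (1 / 4) δ with hδ4 | hδ4
  · refine ⟨fun _ => ∅, by simp, ?_⟩
    have := quad_count_large M a b δ θ μ P hδ4 hP
    simp only [Finset.card_empty, Nat.cast_zero, Finset.sum_const_zero, add_zero]
    have h1 : 0 ≤ δ * M := by positivity
    have h2 : 0 ≤ 16 / w * (Y + δ * M) := by positivity
    linarith
  · -- the window length for which chords are parallel: `|μ| W³ / M³` and `δW` are both small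
    set W : ℝ := min (w * M / Y) (1 / (9 * δ)) with hW
    have hW0 : 0 < W := by positivity
    have hWinv : 1 / W ≤ Y / (w * M) + 9 * δ := by
      rcases min_cases (w * M / Y) (1 / (9 * δ)) with ⟨h, -⟩ | ⟨h, -⟩
      · rw [hW, h, one_div_div]; linarith
      · rw [hW, h, one_div_one_div]
        have : 0 ≤ Y / (w * M) := by positivity
        linarith
    -- the curve passes within `δ ≤ 1/4` of the points, and the abscissae `2m` are `2` apart,
    -- so `m'` determines `m`
    have hinj : Set.InjOn (fun p : ℕ × ℕ => 2 * p.2 + b) (P : Set (ℕ × ℕ)) := by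
      intro p hp p' hp' he
      have he' : p.2 = p'.2 := by simp only at he; omega
      refine Prod.ext ?_ he'
      have h1 := abs_le.1 (hP p hp).2.2
      have h2 := abs_le.1 (hP p' hp').2.2
      rw [he'] at h1
      have h3 : |(((p.1 : ℤ) - p'.1 : ℤ) : ℝ)| < 1 := by
        push_cast
        rw [abs_lt]
        constructor <;> linarith [h1.1, h1.2, h2.1, h2.2]
      have h4 : |(p.1 : ℤ) - p'.1| < 1 := by exact_mod_cast h3
      have := Int.abs_lt_one_iff.1 h4
      omega
    set S := P.image (fun p : ℕ × ℕ => 2 * p.2 + b) with hS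
    have hx : ∀ y : ℕ, ∃ x : ℤ, y ∈ S → |(x : ℝ) - θ * y - μ / y| ≤ δ := by
      intro y
      by_cases hy : y ∈ S
      · obtain ⟨p, hp, hpy⟩ := Finset.mem_image.1 hy
        refine ⟨2 * p.1 + a, fun _ => ?_⟩
        have := (hP p hp).2.2
        rw [← hpy]
        push_cast
        exact this
      · exact ⟨0, fun h => absurd h hy⟩
    choose x hx using hx
    have hsmall : 8 * |μ| * W ^ 3 / ((2 * M : ℕ) : ℝ) ^ 3 + 4 * δ * W < 1 := by
      have h1 : 4 * δ * W < 1 / 2 := by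
        have : W ≤ 1 / (9 * δ) := min_le_right _ _
        calc 4 * δ * W ≤ 4 * δ * (1 / (9 * δ)) := by gcongr
          _ = 4 / 9 := by field_simp
          _ < _ := by norm_num
      have h2 : 8 * |μ| * W ^ 3 / ((2 * M : ℕ) : ℝ) ^ 3 < 1 / 2 := by
        have : W ≤ w * M / Y := min_le_left _ _
        push_cast
        calc 8 * |μ| * W ^ 3 / (2 * (M : ℝ)) ^ 3
            ≤ 8 * (K * (H : ℝ) ^ 2) * (w * M / Y) ^ 3 / (2 * (M : ℝ)) ^ 3 := by gcongr
          _ = w ^ 3 * K := by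
              rw [← hY3]
              field_simp
              ring
          _ < _ := hwK
      linarith
    have hSr : ∀ y ∈ S, 2 * M ≤ y ∧ y ≤ 4 * (2 * M) := by
      intro y hy
      obtain ⟨p, hp, rfl⟩ := Finset.mem_image.1 hy
      have := (hP p hp).2.1
      constructor <;> omega
    obtain ⟨R, hR1, hR2⟩ := points_near_curve (2 * M) W θ μ δ (by omega) hW0 hδ.le hsmall S x hSr hx
    refine ⟨R, ?_, ?_⟩
    · intro j hj r hr
      obtain ⟨g1, g2⟩ := hR1 j hj r hr
      refine ⟨by linarith, g2.trans (le_of_eq ?_)⟩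
      push_cast
      ring
    · rw [hS, Finset.card_image_of_injOn hinj, show 6 * (2 * M) = 12 * M by ring] at hR2
      refine hR2.trans (add_le_add ?_ le_rfl)
      push_cast
      have e : 4 * (2 * (M : ℝ)) / W = 8 * M * (1 / W) := by ring
      have e2 : 8 * (M : ℝ) * (1 / W) ≤ 8 * M * (Y / (w * M) + 9 * δ) := by gcongr
      have e3 : 8 * (M : ℝ) * (Y / (w * M) + 9 * δ) = 8 / w * Y + 72 * (δ * M) := by
        field_simp
        ring
      have e4 : (16 / w + 150) * (Y + δ * M) = 2 * (8 / w * Y) + 150 * Y +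
        16 / w * (δ * M) + 150 * (δ * M) := by ring
      have e5 : 0 ≤ δ * M := by positivity
      have e6 : 0 ≤ 16 / w * (δ * M) := by positivity
      rw [e, e4]
      linarith

/-! ### The count of sextuples -/

lemma sextCount_eq (α : ℝ) (M H₁ H₂ : ℕ) (Δ : ℝ) : sextCount α M H₁ H₂ Δ =
    ∑ q ∈ quads H₁ H₂, ((Finset.Ico M (2 * M) ×ˢ Finset.Ico M (2 * M)).filter (fun p : ℕ × ℕ =>
      |tCZ α p.1 q.1.1 q.2.1 - tCZ α p.2 q.1.2 q.2.2|
        ≤ Δ * ((M : ℝ) ^ (α - 2) * H₁ * H₂))).card := by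
  rw [sextCount, Finset.card_filter, Finset.sum_product_right]
  exact Finset.sum_congr rfl (fun q _ => (Finset.card_filter _ _).symm)

/-- The bound for `H₂ ≤ cM`, with the divisor bound `D` and the logarithms kept explicit. -/
lemma main_count (α : ℝ) (h0 : α ≠ 0) (h1 : α ≠ 1) (h2 : α ≠ 2) : ∃ c C : ℝ, 0 < c ∧ 0 < C ∧
    ∀ (M H₁ H₂ D : ℕ) (Δ : ℝ), 1 ≤ M → 1 ≤ H₁ → H₁ ≤ H₂ → (H₂ : ℝ) ≤ c * M → 0 < Δ →
      (∀ n : ℕ, 1 ≤ n → n < 4 * (H₁ * H₂) → n.divisors.card ≤ D) →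
      (sextCount α M H₁ H₂ Δ : ℝ) ≤
        C * ((D : ℝ) ^ 2 * (1 + Real.log (4 * (H₁ * H₂ : ℕ))) * (1 + Real.log (12 * M : ℕ)) ^ 2) *
          ((M : ℝ) * H₁ * H₂ + Δ * ((M : ℝ) * H₁ * H₂) ^ 2
              + ((M : ℝ) ^ 2)⁻¹ * (H₁ : ℝ) ^ 2 * (H₂ : ℝ) ^ 6
              + (H₁ : ℝ) ^ 2 * (H₂ : ℝ) ^ ((8 : ℝ) / 3)) := by
  obtain ⟨c, C₁, K, hc, hc2, hC₁, hK, hred⟩ := reduction α h0 h1 h2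
  have hβ : (α - 2)⁻¹ ≠ 0 := inv_ne_zero (sub_ne_zero.2 h2)
  obtain ⟨C₂, hC₂, hquad⟩ := quad_count K hK
  obtain ⟨C₃, hC₃, hrat⟩ := rational_count _ hβ
  refine ⟨c, (C₂ + 256 * C₃) * (1 + C₁), hc, by positivity, ?_⟩
  intro M H₁ H₂ D Δ hM hH1 hH12 hH2 hΔ hD
  have hH2' : 1 ≤ H₂ := hH1.trans hH12
  have hM1 : (1 : ℝ) ≤ M := by exact_mod_cast hM
  have hM0 : (0 : ℝ) < M := by linarith
  have hH1R : (1 : ℝ) ≤ H₁ := by exact_mod_cast hH1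
  have hH2R : (1 : ℝ) ≤ H₂ := by exact_mod_cast hH2'
  have hH2M : 2 * H₂ ≤ M := by
    have : (H₂ : ℝ) ≤ 1 / 2 * M := hH2.trans (by gcongr)
    have : 2 * (H₂ : ℝ) ≤ M := by linarith
    exact_mod_cast this
  have hN1 : 1 ≤ H₁ * H₂ := Nat.mul_pos hH1 hH2'
  have hN1R : (1 : ℝ) ≤ ((H₁ * H₂ : ℕ) : ℝ) := by exact_mod_cast hN1
  have hD1 : (1 : ℝ) ≤ D := by
    have := hD 1 le_rfl (by omega)
    simp only [Nat.divisors_one, Finset.card_singleton] at this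
    exact_mod_cast this
  set δ : ℝ := C₁ * (Δ * M + (H₂ : ℝ) ^ 4 / (M : ℝ) ^ 3) with hδ
  have hδ0 : 0 < δ := by positivity
  set Y : ℝ := (H₂ : ℝ) ^ ((2 : ℝ) / 3) with hY
  have hY0 : 0 < Y := by positivity
  set P : (ℕ × ℕ) × (ℕ × ℕ) → Finset (ℕ × ℕ) := fun q =>
    (Finset.Ico M (2 * M) ×ˢ Finset.Ico M (2 * M)).filter (fun p : ℕ × ℕ =>
      |tCZ α p.1 q.1.1 q.2.1 - tCZ α p.2 q.1.2 q.2.2|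
        ≤ Δ * ((M : ℝ) ^ (α - 2) * H₁ * H₂)) with hP
  have hR : ∀ q ∈ quads H₁ H₂, ∃ R : ℕ → Finset ℚ,
      (∀ j, 1 ≤ j → ∀ r ∈ R j, r.den * j ≤ 12 * M ∧
        |quadSlope (α - 2)⁻¹ q - r| ≤ 256 * δ * M / ((r.den : ℝ) ^ 2 * j)) ∧
      ((P q).card : ℝ) ≤ C₂ * (Y + δ * M) + ∑ j ∈ Finset.Icc 1 (12 * M), ((R j).card : ℝ) := by
    intro q hq
    obtain ⟨⟨⟨a1, a2⟩, b1, b2⟩, ⟨c1, c2⟩, d1, d2⟩ := mem_quads.1 hq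
    obtain ⟨μ, hμ, hm⟩ := hred M H₁ H₂ Δ hM hH1 hH12 hH2 hΔ q.1.1 q.2.1 q.1.2 q.2.2
      a1 a2 c1 c2 b1 b2 d1 d2
    refine hquad M H₂ (q.1.1 + q.2.1) (q.1.2 + q.2.2) δ (quadSlope (α - 2)⁻¹ q) μ (P q) hM hH2'
      (by omega) hδ0 hμ ?_
    intro p hp
    simp only [hP, Finset.mem_filter, Finset.mem_product, Finset.mem_Ico] at hp
    obtain ⟨⟨g1, g2⟩, g3⟩ := hp
    refine ⟨g1, g2, ?_⟩
    have := hm p.1 p.2 g1.1 g1.2 g2.1 g2.2 g3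
    push_cast
    rw [← add_assoc, ← add_assoc]
    rw [quadSlope]
    exact this
  choose! R hR1 hR2 using hR
  have hsum := hrat H₁ H₂ D (12 * M) (256 * δ * M) R hH1 hH2' (by omega) (by positivity) hD hR1
  rw [sextCount_eq]
  set LN := 1 + Real.log (4 * (H₁ * H₂ : ℕ)) with hLN
  set LB := 1 + Real.log (12 * M : ℕ) with hLB
  have hLN1 : 1 ≤ LN := by
    have := Real.log_nonneg (by linarith : (1 : ℝ) ≤ 4 * (H₁ * H₂ : ℕ))
    linarith
  have hLB1 : 1 ≤ LB := by
    have := Real.log_nonneg (x := ((12 * M : ℕ) : ℝ)) (by push_cast; linarith)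
    linarith
  set Z := (D : ℝ) ^ 2 * LN * LB ^ 2 with hZ
  have hZ1 : 1 ≤ Z := by
    have e1 : 1 ≤ (D : ℝ) ^ 2 := one_le_pow₀ hD1
    have e2 : 1 ≤ LB ^ 2 := one_le_pow₀ hLB1
    exact one_le_mul_of_one_le_of_one_le (one_le_mul_of_one_le_of_one_le e1 hLN1) e2
  set N : ℝ := (H₁ : ℝ) * H₂ with hN
  have hNcast : ((H₁ * H₂ : ℕ) : ℝ) = N := by push_cast; rfl
  have hN0 : 0 < N := by positivity
  rw [hNcast] at hsum
  have hfirst : ((∑ q ∈ quads H₁ H₂, (P q).card : ℕ) : ℝ) ≤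
      N ^ 2 * (C₂ * (Y + δ * M)) + C₃ * (D : ℝ) ^ 2 * LN *
        (N * (12 * M : ℕ) + 256 * δ * M * N ^ 2) * LB ^ 2 := by
    push_cast
    refine (Finset.sum_le_sum hR2).trans ?_
    rw [Finset.sum_add_distrib, Finset.sum_const, card_quads, nsmul_eq_mul, Nat.cast_pow, hNcast]
    push_cast at hsum ⊢
    linarith
  refine hfirst.trans ?_
  have hδMN : δ * M * N ^ 2 = C₁ * (Δ * ((M : ℝ) * H₁ * H₂) ^ 2
      + ((M : ℝ) ^ 2)⁻¹ * (H₁ : ℝ) ^ 2 * (H₂ : ℝ) ^ 6) := by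
    rw [hδ, hN]; field_simp
  have hYN : N ^ 2 * Y = (H₁ : ℝ) ^ 2 * (H₂ : ℝ) ^ ((8 : ℝ) / 3) := by
    rw [show (8 : ℝ) / 3 = 2 + 2 / 3 by norm_num, Real.rpow_add (by linarith), hN, ← hY]
    norm_cast
    push_cast
    ring
  set F : ℝ := M * N + δ * M * N ^ 2 + N ^ 2 * Y with hF
  have hu : 0 ≤ M * N := by positivity
  have hv : 0 ≤ δ * M * N ^ 2 := by positivity
  have hw : 0 ≤ N ^ 2 * Y := by positivity
  have hF0 : 0 ≤ F := by positivity
  calc _ = C₂ * (1 * (N ^ 2 * Y + δ * M * N ^ 2))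
        + C₃ * (Z * (12 * (M * N) + 256 * (δ * M * N ^ 2))) := by
        rw [hZ]; push_cast; ring
    _ ≤ C₂ * (Z * F) + C₃ * (Z * (256 * F)) := by
        gcongr
        · linarith
        · linarith
    _ = ((C₂ + 256 * C₃) * Z) * F := by ring
    _ ≤ ((C₂ + 256 * C₃) * Z) * ((1 + C₁) * ((M : ℝ) * H₁ * H₂ + Δ * ((M : ℝ) * H₁ * H₂) ^ 2
              + ((M : ℝ) ^ 2)⁻¹ * (H₁ : ℝ) ^ 2 * (H₂ : ℝ) ^ 6
              + (H₁ : ℝ) ^ 2 * (H₂ : ℝ) ^ ((8 : ℝ) / 3))) := by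
        gcongr
        rw [hF, hδMN, hYN, hN]
        have s1 : 0 ≤ (M : ℝ) * H₁ * H₂ := by positivity
        have s2 : 0 ≤ Δ * ((M : ℝ) * H₁ * H₂) ^ 2 := by positivity
        have s3 : 0 ≤ ((M : ℝ) ^ 2)⁻¹ * (H₁ : ℝ) ^ 2 * (H₂ : ℝ) ^ 6 := by positivity
        have s4 : 0 ≤ (H₁ : ℝ) ^ 2 * (H₂ : ℝ) ^ ((8 : ℝ) / 3) := by positivity
        have s5 := mul_nonneg hC₁.le s1
        have s6 := mul_nonneg hC₁.le s4
        linarith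
    _ = _ := by ring

/-- The divisor bound and the logarithms cost at most `M^{2ε}`. -/
lemma absorb (ε : ℝ) (hε : 0 < ε) : ∃ C : ℝ, 0 < C ∧ ∀ M N : ℕ, 10 ≤ M → 1 ≤ N → N ≤ M ^ 2 →
    ∃ D : ℕ, (∀ n : ℕ, 1 ≤ n → n < 4 * N → n.divisors.card ≤ D) ∧
      (D : ℝ) ^ 2 * (1 + Real.log (4 * (N : ℕ))) * (1 + Real.log (12 * M : ℕ)) ^ 2
        ≤ C * (M : ℝ) ^ (2 * ε) := by
  set η := 2 * ε / 15 with hη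
  have hη0 : 0 < η := by positivity
  obtain ⟨Cd, hCd, hd⟩ := divisor_bound η hη0
  obtain ⟨Cl, hCl, hl⟩ := log_bound η hη0
  refine ⟨Cd ^ 2 * Cl ^ 3, by positivity, ?_⟩
  intro M N hM hN hNM
  have hMR : (10 : ℝ) ≤ M := by exact_mod_cast hM
  have hM0 : (0 : ℝ) < M := by linarith
  have hNR : (1 : ℝ) ≤ N := by exact_mod_cast hN
  have hNMR : (N : ℝ) ≤ (M : ℝ) ^ 2 := by exact_mod_cast hNM
  have h4 : 4 * (N : ℝ) ≤ (M : ℝ) ^ 3 := by nlinarith [sq_nonneg (M : ℝ)]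
  have h12 : ((12 * M : ℕ) : ℝ) ≤ (M : ℝ) ^ 3 := by push_cast; nlinarith [sq_nonneg (M : ℝ)]
  set X : ℝ := ((M : ℝ) ^ 3) ^ η with hX
  have hX0 : 0 < X := by positivity
  refine ⟨⌊Cd * X⌋₊, ?_, ?_⟩
  · intro n hn hn4
    apply Nat.le_floor
    refine (hd n hn).trans ?_
    have : (n : ℝ) ≤ (M : ℝ) ^ 3 := by
      have : (n : ℝ) ≤ 4 * N := by exact_mod_cast hn4.le
      linarith
    rw [hX]
    gcongr
  · have e1 : ((⌊Cd * X⌋₊ : ℕ) : ℝ) ≤ Cd * X := Nat.floor_le (by positivity)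
    have e2 : 1 + Real.log (4 * (N : ℕ)) ≤ Cl * X := by
      refine (hl _ (by linarith)).trans ?_
      rw [hX]; gcongr
    have e3 : 1 + Real.log (12 * M : ℕ) ≤ Cl * X := by
      refine (hl _ (by push_cast; linarith)).trans ?_
      rw [hX]; gcongr
    have e4 : 0 ≤ Real.log (4 * (N : ℕ)) := Real.log_nonneg (by linarith)
    have e5 : 0 ≤ Real.log (12 * M : ℕ) := Real.log_nonneg (by push_cast; linarith)
    have e6 : X ^ 5 = (M : ℝ) ^ (2 * ε) := by
      rw [hX, ← Real.rpow_natCast, ← Real.rpow_natCast, ← Real.rpow_mul (by positivity),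
        ← Real.rpow_mul (by positivity), hη]
      congr 1
      push_cast
      ring
    calc _ ≤ (Cd * X) ^ 2 * (Cl * X) * (Cl * X) ^ 2 := by gcongr
      _ = Cd ^ 2 * Cl ^ 3 * X ^ 5 := by ring
      _ = _ := by rw [e6]

lemma sextCount_trivial (α : ℝ) (M H₁ H₂ : ℕ) (Δ : ℝ) :
    sextCount α M H₁ H₂ Δ ≤ M ^ 2 * (H₁ * H₂) ^ 2 := by
  rw [sextCount_eq]
  calc _ ≤ ∑ _q ∈ quads H₁ H₂, M ^ 2 := by
        apply Finset.sum_le_sum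
        intro q _
        refine (Finset.card_filter_le _ _).trans (le_of_eq ?_)
        rw [Finset.card_product, Nat.card_Ico, show 2 * M - M = M by omega, sq]
    _ = _ := by rw [Finset.sum_const, card_quads, smul_eq_mul, mul_comm]

/-- **Cao–Zhai, first spacing bound for third differences of monomials.**
Fix `ε > 0` and `α ∉ {0,1,2,3}`. For integers `M, H₁, H₂ ≥ 10` with
`H₁ ≤ H₂ ≤ M^{2/3−ε}` and `Δ > 0`,
`𝓕(M, H₁, H₂, Δ) ≪ M^{2ε}(MH₁H₂ + Δ(MH₁H₂)² + M^{−2}H₁²H₂⁶ + H₁²H₂^{8/3})`. -/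
theorem cao_zhai_first
    (ε α : ℝ) (hε : 0 < ε) (h0 : α ≠ 0) (h1 : α ≠ 1) (h2 : α ≠ 2) (h3 : α ≠ 3) :
    ∃ C : ℝ, 0 < C ∧
      ∀ (M H₁ H₂ : ℕ) (Δ : ℝ), 10 ≤ M → 10 ≤ H₁ → 10 ≤ H₂ →
        H₁ ≤ H₂ → (H₂ : ℝ) ≤ (M : ℝ) ^ (2 / 3 - ε) → 0 < Δ →
        (sextCount α M H₁ H₂ Δ : ℝ) ≤
          C * (M : ℝ) ^ (2 * ε) *
            ((M : ℝ) * H₁ * H₂ + Δ * ((M : ℝ) * H₁ * H₂) ^ 2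
              + ((M : ℝ) ^ 2)⁻¹ * (H₁ : ℝ) ^ 2 * (H₂ : ℝ) ^ 6
              + (H₁ : ℝ) ^ 2 * (H₂ : ℝ) ^ ((8 : ℝ) / 3)) := by
  obtain ⟨c, C, hc, hC, hmain⟩ := main_count α h0 h1 h2
  obtain ⟨C', hC', habs⟩ := absorb ε hε
  refine ⟨C * C' + (c⁻¹ ^ 3) ^ 3, by positivity, ?_⟩
  intro M H₁ H₂ Δ hM hH1 hH2 hH12 hH2M hΔ
  have hMR : (10 : ℝ) ≤ M := by exact_mod_cast hM
  have hM0 : (0 : ℝ) < M := by linarith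
  have hH2le : (H₂ : ℝ) ≤ (M : ℝ) ^ ((2 : ℝ) / 3) :=
    hH2M.trans (Real.rpow_le_rpow_of_exponent_le (by linarith) (by linarith))
  have hH2le1 : (H₂ : ℝ) ≤ M := hH2le.trans (Real.rpow_le_self_of_one_le (by linarith) (by norm_num))
  have hH2M' : H₂ ≤ M := by exact_mod_cast hH2le1
  have hNM : H₁ * H₂ ≤ M ^ 2 := by
    rw [sq]; exact Nat.mul_le_mul (hH12.trans hH2M') hH2M'
  have hMε : 1 ≤ (M : ℝ) ^ (2 * ε) := Real.one_le_rpow (by linarith) (by positivity)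
  have s1 : 0 ≤ (M : ℝ) * H₁ * H₂ := by positivity
  have s2 : 0 ≤ Δ * ((M : ℝ) * H₁ * H₂) ^ 2 := by positivity
  have s3 : 0 ≤ ((M : ℝ) ^ 2)⁻¹ * (H₁ : ℝ) ^ 2 * (H₂ : ℝ) ^ 6 := by positivity
  have s4 : 0 ≤ (H₁ : ℝ) ^ 2 * (H₂ : ℝ) ^ ((8 : ℝ) / 3) := by positivity
  set F := (M : ℝ) * H₁ * H₂ + Δ * ((M : ℝ) * H₁ * H₂) ^ 2
              + ((M : ℝ) ^ 2)⁻¹ * (H₁ : ℝ) ^ 2 * (H₂ : ℝ) ^ 6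
              + (H₁ : ℝ) ^ 2 * (H₂ : ℝ) ^ ((8 : ℝ) / 3) with hF
  have hF0 : 0 ≤ F := by positivity
  have hF1 : (M : ℝ) * H₁ * H₂ ≤ F := by rw [hF]; linarith
  rcases le_or_gt (H₂ : ℝ) (c * M) with hcase | hcase
  · obtain ⟨D, hD1, hD2⟩ := habs M (H₁ * H₂) hM (Nat.mul_pos (by omega) (by omega)) hNM
    refine (hmain M H₁ H₂ D Δ (by omega) (by omega) hH12 hcase hΔ hD1).trans ?_
    calc _ ≤ C * (C' * (M : ℝ) ^ (2 * ε)) * F := by gcongr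
      _ = (C * C') * (M : ℝ) ^ (2 * ε) * F := by ring
      _ ≤ _ := by
        gcongr
        have : 0 < (c⁻¹ ^ 3) ^ 3 := by positivity
        linarith
  · -- here `c M < M^{2/3}`, so `M` is bounded and the trivial estimate suffices
    have hMc : (M : ℝ) ≤ c⁻¹ ^ 3 := by
      set y : ℝ := (M : ℝ) ^ ((1 : ℝ) / 3) with hy
      have hy0 : 0 < y := by positivity
      have hy3 : y ^ 3 = M := by
        rw [hy, ← Real.rpow_natCast, ← Real.rpow_mul hM0.le]; norm_num
      have hy2 : y ^ 2 = (M : ℝ) ^ ((2 : ℝ) / 3) := by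
        rw [hy, ← Real.rpow_natCast, ← Real.rpow_mul hM0.le]; norm_num
      have h5 : c * y ^ 3 < y ^ 2 := by rw [hy3, hy2]; linarith
      have h6 : c * y < 1 := by
        have : (c * y) * y ^ 2 < 1 * y ^ 2 := by linarith
        exact lt_of_mul_lt_mul_right this (by positivity)
      have h7 : y ≤ c⁻¹ := by
        rw [← one_div, le_div_iff₀ hc]; linarith
      rw [← hy3]
      gcongr
    have htriv : (sextCount α M H₁ H₂ Δ : ℝ) ≤ (M : ℝ) ^ 2 * ((H₁ : ℝ) * H₂) ^ 2 := by
      exact_mod_cast sextCount_trivial α M H₁ H₂ Δ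
    have hNMR : (H₁ : ℝ) * H₂ ≤ (M : ℝ) ^ 2 := by exact_mod_cast hNM
    calc _ ≤ (M : ℝ) ^ 2 * ((H₁ : ℝ) * H₂) ^ 2 := htriv
      _ = (M * ((H₁ : ℝ) * H₂)) * ((M : ℝ) * H₁ * H₂) := by ring
      _ ≤ (M * (M : ℝ) ^ 2) * F := by gcongr
      _ = (M : ℝ) ^ 3 * 1 * F := by ring
      _ ≤ (c⁻¹ ^ 3) ^ 3 * (M : ℝ) ^ (2 * ε) * F := by gcongr
      _ ≤ _ := by
        gcongr
        have : 0 < C * C' := by positivity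
        linarith
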